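/- Let n ≥ 3 be odd and let G be a connected well-covered unicyclic graph of order n. If n ≤ 7, then C_n ⪯ G. If n ≥ 9, then H ⪯ G for every graph H of order n in the family S_P. -/

import Mathlib

/-!
The proof rests on a substitution that turns the well-covered unicyclic graphs of order `2a + 1` into
trees on `a + 1` vertices, where the path is extremal.

For a graph star `T*` one has `I(T*, x) = (1 + x) ^ n * I(T, x / (1 + x))`. Rooted trees (`RTree`) are
generated from a single vertex by joining two roots with an edge, and `TreeRep G S r τ a b` says that
the independent sets of `G[S]` are counted, after this substitution, by the rooted tree `τ`. The
operations of attaching a pendant vertex and of joining two roots preserve such representations. A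
triangle or a pentagon with a tree attached at one vertex has a representation as well, in which one
vertex of the triangle, respectively two vertices of the pentagon, do not appear in `τ`
(`TreeRep.triangle`, `TreeRep.pentagon`). Consequently every graph of order `2a + 1` in `S_P` satisfies
`I(H, x) = (1 + x) ^ a * I(P_{a+1}, x / (1 + x))` (`eval_SPgraph`).

Let `G` be well-covered and unicyclic of order `2a + 1`. If `G` has a pendant vertex, removing the
bridges at a vertex one after another shows that `G` is assembled from well-covered trees and one
triangle or pentagon by these operations (`UniOn.rep`); hence
`I(G, x) = (1 + x) ^ a * I(τ, x / (1 + x))` for some tree `τ` on `a + 1` vertices. Among trees with a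
given number of vertices the path has the largest independence polynomial on the interval from the
largest root of the tree to `0` (`RTree.le_pathPoly`), which gives the comparison of `G` with `S_P`.
For `n ≤ 7` the cycle `C_n` is in turn at least as large as the graphs in `S_P`
(`le_eval_cycleGraph`).

If `G` has no pendant vertex it is a cycle. Then there is nothing to prove for `n ≤ 7`, while cycles
with at least `9` vertices are not well-covered (`not_WC_cycle`).
-/

open Polynomial SimpleGraph

/-- A finset of vertices is independent: pairwise nonadjacent. -/
def IsIndepFinset {V : Type*} (G : SimpleGraph V) (s : Finset V) : Prop :=
  ∀ u ∈ s, ∀ v ∈ s, ¬ G.Adj u v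

open Classical in
/-- The independence polynomial of a finite graph, with real coefficients. -/
noncomputable def indepPoly {V : Type*} [Fintype V] (G : SimpleGraph V) : Polynomial ℝ :=
  ∑ s : Finset V, if IsIndepFinset G s then (X : Polynomial ℝ) ^ s.card else 0

/-- `xi G` : the largest real root of the independence polynomial of `G`. -/
noncomputable def xi {V : Type*} [Fintype V] (G : SimpleGraph V) : ℝ :=
  sSup {x : ℝ | (indepPoly G).eval x = 0}

/-- `Pre H G` (`H ⪯ G`) : `I(H,x) ≥ I(G,x)` for all `x ∈ [ξ(G), 0]`. -/
def Pre {V W : Type*} [Fintype V] [Fintype W] (H : SimpleGraph W) (G : SimpleGraph V) : Prop :=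
  ∀ x ∈ Set.Icc (xi G) 0, (indepPoly G).eval x ≤ (indepPoly H).eval x

/-- `SPre H G` (`H ≺ G`). -/
def SPre {V W : Type*} [Fintype V] [Fintype W] (H : SimpleGraph W) (G : SimpleGraph V) : Prop :=
  Pre H G ∧ indepPoly H ≠ indepPoly G

open Classical in
/-- A graph is well-covered if all maximal independent sets have the same size. -/
def WellCovered {V : Type*} (G : SimpleGraph V) : Prop :=
  ∀ s t : Finset V,
    IsIndepFinset G s → (∀ v ∉ s, ¬ IsIndepFinset G (insert v s)) →
    IsIndepFinset G t → (∀ v ∉ t, ¬ IsIndepFinset G (insert v t)) →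
    s.card = t.card

/-- A connected unicyclic graph: connected with as many edges as vertices. -/
def Unicyclic {V : Type*} [Fintype V] (G : SimpleGraph V) : Prop :=
  G.Connected ∧ G.edgeSet.ncard = Fintype.card V

/-- The graph star (corona with `K₁`) of `G`: each vertex `inl v` gets a pendant
vertex `inr v`. -/
def corona {V : Type*} (G : SimpleGraph V) : SimpleGraph (V ⊕ V) :=
  SimpleGraph.fromRel (fun a b =>
    match a, b with
    | Sum.inl u, Sum.inl v => G.Adj u v
    | Sum.inl u, Sum.inr v => u = v
    | _, _ => False)

/-- `Ugraph n` (`U_n`, `n ≥ 3`): a triangle `0,1,2` with `n - 3` pendant vertices attached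
to vertex `0`. -/
def Ugraph (n : ℕ) : SimpleGraph (Fin n) :=
  SimpleGraph.fromRel (fun i j => i.val = 0 ∨ (i.val = 1 ∧ j.val = 2))

/-- `Dgraph n` (`D_n`, `n ≥ 4`): a path `0,1,...,n-1` plus the chord `{0,2}`, i.e. a
triangle with a path on `n - 3` vertices attached. -/
def Dgraph (n : ℕ) : SimpleGraph (Fin n) :=
  SimpleGraph.fromRel (fun i j => j.val = i.val + 1 ∨ (i.val = 0 ∧ j.val = 2))

/-- `starGraph n` (`S_n = K_{1,n-1}`): vertex `0` adjacent to all other vertices. -/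
def starGraph (n : ℕ) : SimpleGraph (Fin n) :=
  SimpleGraph.fromRel (fun i _ => i.val = 0)

/-- `Mgraph n` (`M_n`, odd `n ≥ 5`): a triangle `0,1,2` with `(n-3)/2` paths of length two
attached at vertex `0`; the middle vertices are the odd indices `3,5,...,n-2` and the leaf
attached to middle vertex `i` is `i + 1`. -/
def Mgraph (n : ℕ) : SimpleGraph (Fin n) :=
  SimpleGraph.fromRel (fun i j =>
    (i.val = 0 ∧ (j.val ≤ 2 ∨ j.val % 2 = 1)) ∨ (i.val = 1 ∧ j.val = 2) ∨
    (i.val % 2 = 1 ∧ 3 ≤ i.val ∧ j.val = i.val + 1))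

/-- `SPgraph g k ℓ` (`G(g,k,ℓ)`, for `g ∈ {3,5}` and `k + ℓ ≥ 1`): a cycle on the vertices
`0,...,g-1`, a copy of `P_k*` on the vertices `g,...,g+2k-1` (path vertices at even offsets,
each followed by its pendant vertex) joined to the cycle vertex `0` by an edge to the
path end `g`, and a copy of `P_ℓ*` on the vertices `g+2k,...,g+2k+2ℓ-1` joined to the cycle
vertex `2` by an edge to the path end `g+2k`. -/
def SPgraph (g k ℓ : ℕ) : SimpleGraph (Fin (g + 2*k + 2*ℓ)) :=
  SimpleGraph.fromRel (fun i j =>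
    (i.val < g ∧ j.val < g ∧ (j.val = i.val + 1 ∨ (i.val = 0 ∧ j.val = g - 1))) ∨
    (i.val = 0 ∧ 0 < k ∧ j.val = g) ∨
    (g ≤ i.val ∧ i.val < g + 2*k ∧ (i.val - g) % 2 = 0 ∧
      (j.val = i.val + 1 ∨ (j.val = i.val + 2 ∧ j.val < g + 2*k))) ∨
    (i.val = 2 ∧ 0 < ℓ ∧ j.val = g + 2*k) ∨
    (g + 2*k ≤ i.val ∧ (i.val - (g + 2*k)) % 2 = 0 ∧
      (j.val = i.val + 1 ∨ j.val = i.val + 2)))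

/-- `Gtree n` (`G_{2n}`, `n ≥ 5`): the tree on `2n` vertices with path `v_1 … v_n` at
indices `0,…,n-1`, `z_1` at index `n`, `y_1, y_2` at `n+1, n+2`, `x_1, x_2` at `n+3, n+4`
(with `v_3 z_1`, `v_3 y_1`, `y_1 y_2`, `v_5 x_1`, `x_1 x_2` edges), and pendant vertices
`w_j` at index `n + j - 1` attached to `v_j` for `6 ≤ j ≤ n`. -/
def Gtree (n : ℕ) : SimpleGraph (Fin (2*n)) :=
  SimpleGraph.fromRel (fun a b =>
    (a.val + 1 = b.val ∧ b.val < n) ∨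
    (a.val = 2 ∧ (b.val = n ∨ b.val = n + 1)) ∨
    (a.val = n + 1 ∧ b.val = n + 2) ∨
    (a.val = 4 ∧ b.val = n + 3) ∨
    (a.val = n + 3 ∧ b.val = n + 4) ∨
    (5 ≤ a.val ∧ a.val < n ∧ b.val = n + a.val))

/-! ### Independence polynomials of rooted trees -/

/-- Rooted trees, generated from the single vertex by joining the roots of two rooted trees with
an edge (the root of the first tree stays the root). -/
inductive RTree : Type
  | leaf : RTree
  | join : RTree → RTree → RTree

namespace RTree

/-- The number of vertices minus one. -/
def rank : RTree → ℕ
  | leaf => 0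
  | join s t => rank s + rank t + 1

/-- The pair consisting of the independence polynomial of the tree and that of the tree with its
root deleted, as functions on the reals. -/
def val : RTree → ℝ → ℝ × ℝ
  | leaf, x => (1 + x, 1)
  | join s t, x =>
    ((val s x).1 * (val t x).2 + (val s x).2 * (val t x).1 - (val s x).2 * (val t x).2,
      (val s x).2 * (val t x).1)

/-- The path with `m + 1` vertices, rooted at an end. -/
def path : ℕ → RTree
  | 0 => leaf
  | m + 1 => join leaf (path m)

lemma continuous_val (τ : RTree) : Continuous τ.val := by
  induction τ with
  | leaf => simp only [val]; fun_prop
  | join s t hs ht => simp only [val]; fun_prop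

lemma val_zero (τ : RTree) : τ.val 0 = (1, 1) := by
  induction τ with
  | leaf => simp [val]
  | join s t hs ht => simp [val, hs, ht]

/-- A continuous function that is positive at `0` and has no zero in `[x, 0]` is positive there. -/
lemma pos_of_ne_zero {f : ℝ → ℝ} (hf : Continuous f) (h0 : 0 < f 0) {x : ℝ} (hx : x ≤ 0)
    (hne : ∀ t, x ≤ t → t ≤ 0 → f t ≠ 0) : 0 < f x := by
  by_contra hcon
  obtain ⟨t, ⟨ht1, ht2⟩, ht⟩ := intermediate_value_Icc hx hf.continuousOn
    (show (0 : ℝ) ∈ Set.Icc (f x) (f 0) from ⟨not_lt.1 hcon, h0.le⟩)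
  exact hne t ht1 ht2 ht

/-- If a continuous function with `f 0 > 0` has a zero in `[x, 0]`, then it has a largest one, to
the right of which it is positive. -/
lemma exists_last_zero {f : ℝ → ℝ} (hf : Continuous f) (h0 : 0 < f 0) {x t : ℝ}
    (hxt : x ≤ t) (ht : t ≤ 0) (hft : f t = 0) :
    ∃ z, x ≤ z ∧ z < 0 ∧ f z = 0 ∧ ∀ u, z < u → u ≤ 0 → 0 < f u := by
  have hK : IsCompact (Set.Icc x 0 ∩ f ⁻¹' {0}) :=
    isCompact_Icc.inter_right (isClosed_singleton.preimage hf)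
  obtain ⟨z, ⟨⟨hz1, hz2⟩, hz3⟩, hmax⟩ := hK.exists_isGreatest ⟨t, ⟨hxt, ht⟩, hft⟩
  refine ⟨z, hz1, lt_of_le_of_ne hz2 ?_, hz3, fun u hu hu0 => ?_⟩
  · rintro rfl
    exact h0.ne' hz3
  · refine pos_of_ne_zero hf h0 hu0 fun v hv hv0 hfv => ?_
    have := hmax ⟨⟨by linarith, hv0⟩, hfv⟩
    linarith

/-- The value at the root-deleted tree is positive and dominates, wherever the independence
polynomial of the tree is positive from there up to `0`. -/
def Dominated (τ : RTree) : Prop :=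
  ∀ x ≤ 0, (∀ t, x ≤ t → t ≤ 0 → 0 < (τ.val t).1) →
    0 < (τ.val x).2 ∧ (τ.val x).1 ≤ (τ.val x).2

/-- If the independence polynomial of a join is positive on `[x, 0]`, so are those of its two
parts: at the last zero of their product that of the join would be nonpositive. -/
lemma factors_pos_aux {s t : RTree} (hs : Dominated s) (ht : Dominated t) {x : ℝ}
    (hpos : ∀ u, x ≤ u → u ≤ 0 → 0 < ((join s t).val u).1) :
    ∀ u, x ≤ u → u ≤ 0 → 0 < (s.val u).1 ∧ 0 < (t.val u).1 := by
  have cs := s.continuous_val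
  have ct := t.continuous_val
  have key : ∀ u, x ≤ u → u ≤ 0 → (s.val u).1 * (t.val u).1 ≠ 0 := by
    intro u hu hu0 hzero
    obtain ⟨z, hxz, hz0, hz, hzpos⟩ := exists_last_zero
      (f := fun u => (s.val u).1 * (t.val u).1) (by fun_prop) (by simp [val_zero]) hu hu0 hzero
    have hsplit : ∀ v, z < v → v ≤ 0 → 0 < (s.val v).1 ∧ 0 < (t.val v).1 := by
      intro v hv hv0
      constructor
      · exact pos_of_ne_zero (f := fun v => (s.val v).1) (by fun_prop) (by simp [val_zero]) hv0
          fun w hw hw0 h => by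
            have := hzpos w (by linarith) hw0
            simp [h] at this
      · exact pos_of_ne_zero (f := fun v => (t.val v).1) (by fun_prop) (by simp [val_zero]) hv0
          fun w hw hw0 h => by
            have := hzpos w (by linarith) hw0
            simp [h] at this
    have hev : ∀ᶠ v in nhdsWithin z (Set.Ioi z), z < v ∧ v ≤ 0 := by
      filter_upwards [Ioc_mem_nhdsGT hz0] with v hv using hv
    have hlim : ∀ {f g : ℝ → ℝ}, Continuous f → Continuous g →
        (∀ v, z < v → v ≤ 0 → f v ≤ g v) → f z ≤ g z := by
      intro f g hf hg h
      exact le_of_tendsto_of_tendsto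
        (hf.continuousAt.tendsto.mono_left nhdsWithin_le_nhds)
        (hg.continuousAt.tendsto.mono_left nhdsWithin_le_nhds)
        (hev.mono fun v hv => h v hv.1 hv.2)
    have hsv := fun v hv hv0 => hs v hv0 fun w hw hw0 => (hsplit w (lt_of_lt_of_le hv hw) hw0).1
    have htv := fun v hv hv0 => ht v hv0 fun w hw hw0 => (hsplit w (lt_of_lt_of_le hv hw) hw0).2
    have h1 : 0 ≤ (s.val z).2 := hlim (f := fun _ => 0) (g := fun v => (s.val v).2)
      (by fun_prop) (by fun_prop) fun v hv hv0 => (hsv v hv hv0).1.le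
    have h2 : 0 ≤ (t.val z).2 := hlim (f := fun _ => 0) (g := fun v => (t.val v).2)
      (by fun_prop) (by fun_prop) fun v hv hv0 => (htv v hv hv0).1.le
    have h3 : (s.val z).1 ≤ (s.val z).2 := hlim (f := fun v => (s.val v).1)
      (g := fun v => (s.val v).2) (by fun_prop) (by fun_prop) fun v hv hv0 => (hsv v hv hv0).2
    have h4 : (t.val z).1 ≤ (t.val z).2 := hlim (f := fun v => (t.val v).1)
      (g := fun v => (t.val v).2) (by fun_prop) (by fun_prop) fun v hv hv0 => (htv v hv hv0).2
    have h5 := hpos z hxz hz0.le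
    simp only [val] at h5
    have hz' : (s.val z).1 * (t.val z).1 = 0 := hz
    nlinarith [mul_nonneg (sub_nonneg.2 h3) (sub_nonneg.2 h4)]
  intro u hu hu0
  constructor
  · exact pos_of_ne_zero (f := fun v => (s.val v).1) (by fun_prop) (by simp [val_zero]) hu0
      fun w hw hw0 => left_ne_zero_of_mul (key w (hu.trans hw) hw0)
  · exact pos_of_ne_zero (f := fun v => (t.val v).1) (by fun_prop) (by simp [val_zero]) hu0
      fun w hw hw0 => right_ne_zero_of_mul (key w (hu.trans hw) hw0)

lemma dominated (τ : RTree) : Dominated τ := by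
  induction τ with
  | leaf => intro x hx _; simp [val, hx]
  | join s t hs ht =>
    intro x hx hpos
    have hf := factors_pos_aux hs ht hpos
    obtain ⟨h1, h2⟩ := hs x hx fun u hu hu0 => (hf u hu hu0).1
    obtain ⟨h3, h4⟩ := ht x hx fun u hu hu0 => (hf u hu hu0).2
    have := (hf x le_rfl hx).2
    simp only [val]
    exact ⟨by positivity, by nlinarith⟩

lemma factors_pos {s t : RTree} {x : ℝ}
    (hpos : ∀ u, x ≤ u → u ≤ 0 → 0 < ((join s t).val u).1) :
    ∀ u, x ≤ u → u ≤ 0 → 0 < (s.val u).1 ∧ 0 < (t.val u).1 :=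
  factors_pos_aux s.dominated t.dominated hpos

/-- The independence polynomial of the path with `m` vertices. -/
def pathPoly : ℕ → ℝ → ℝ
  | 0, _ => 1
  | 1, x => 1 + x
  | m + 2, x => pathPoly (m + 1) x + x * pathPoly m x

lemma val_path (m : ℕ) (x : ℝ) : (path m).val x = (pathPoly (m + 1) x, pathPoly m x) := by
  induction m with
  | zero => simp [path, val, pathPoly]
  | succ m ih => simp only [path, val, ih, pathPoly, Prod.mk.injEq]; constructor <;> ring

lemma rank_path (m : ℕ) : (path m).rank = m := by
  induction m with
  | zero => rfl
  | succ m ih => simp [path, rank, ih]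

/-- Joining the paths with `i + 1` and `j + 1` vertices end to end. -/
lemma pathPoly_add (i j : ℕ) (x : ℝ) : pathPoly (i + j + 2) x =
    pathPoly (i + 1) x * pathPoly j x + pathPoly i x * pathPoly (j + 1) x
      - pathPoly i x * pathPoly j x := by
  induction i using Nat.twoStepInduction with
  | zero => simp [pathPoly]; ring
  | one => rw [show 1 + j + 2 = j + 1 + 2 by ring]; simp only [pathPoly]; ring
  | more i h1 h2 =>
    rw [show i + 2 + j + 2 = (i + j + 2) + 2 by ring, pathPoly,
      show i + j + 2 + 1 = i + 1 + j + 2 by ring, h1, h2]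
    simp only [pathPoly]; ring

lemma pathPoly_pos {m : ℕ} : ∀ {x : ℝ}, x ≤ 0 →
    (∀ t, x ≤ t → t ≤ 0 → 0 < pathPoly (m + 1) t) → ∀ i ≤ m + 1, 0 < pathPoly i x := by
  induction m with
  | zero =>
    intro x hx h i hi
    interval_cases i
    · simp [pathPoly]
    · exact h x le_rfl hx
  | succ m ih =>
    intro x hx h i hi
    rcases Nat.of_le_succ hi with hi | rfl
    · refine ih hx (fun t ht ht0 => ?_) i hi
      have := (factors_pos (s := leaf) (t := path m) (x := x) (fun u hu hu0 => by
        have := h u hu hu0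
        rw [show join leaf (path m) = path (m + 1) from rfl, val_path]
        exact this) t ht ht0).2
      rwa [val_path] at this
    · exact h x le_rfl hx

lemma pathPoly_anti {m : ℕ} {x : ℝ} (hx : x ≤ 0) (h : ∀ i ≤ m + 1, 0 < pathPoly i x) :
    pathPoly (m + 1) x ≤ pathPoly m x := by
  cases m with
  | zero => simp [pathPoly, hx]
  | succ m => rw [pathPoly]; nlinarith [h m (by omega)]

/-- Among the trees with a given number of vertices, the path has the largest independence
polynomial, at every point from which the polynomial of the tree is positive up to `0`. The proof
compares at the same time the ratios of the root-deleted tree to the tree, which are smallest for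
a path rooted at an end. -/
lemma le_pathPoly (τ : RTree) : ∀ x ≤ 0, (∀ t, x ≤ t → t ≤ 0 → 0 < (τ.val t).1) →
    (τ.val x).1 ≤ pathPoly (τ.rank + 1) x ∧
    pathPoly τ.rank x * (τ.val x).1 ≤ (τ.val x).2 * pathPoly (τ.rank + 1) x ∧
    ∀ i ≤ τ.rank + 1, 0 < pathPoly i x := by
  induction τ with
  | leaf =>
    intro x hx h
    have := h x le_rfl hx
    simp only [val] at this
    refine ⟨by simp [val, rank, pathPoly], by simp [val, rank, pathPoly], fun i hi => ?_⟩
    simp only [rank] at hi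
    interval_cases i
    · simp [pathPoly]
    · simpa [pathPoly] using this
  | join s t hs ht =>
    intro x hx h
    have hf := factors_pos h
    have first : ∀ u, x ≤ u → u ≤ 0 →
        ((join s t).val u).1 ≤ pathPoly ((join s t).rank + 1) u := by
      intro u hu hu0
      obtain ⟨a1, a2, a3⟩ := hs u hu0 fun v hv hv0 => (hf v (hu.trans hv) hv0).1
      obtain ⟨b1, b2, b3⟩ := ht u hu0 fun v hv hv0 => (hf v (hu.trans hv) hv0).2
      have hA := h u hu hu0
      obtain ⟨f1, f2⟩ := hf u hu hu0
      have p1 := a3 _ le_rfl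
      have q1 := b3 _ le_rfl
      have p2 := pathPoly_anti hu0 a3
      have q2 := pathPoly_anti hu0 b3
      rw [show (join s t).rank + 1 = s.rank + t.rank + 2 from rfl, pathPoly_add]
      simp only [val] at hA ⊢
      generalize (s.val u).1 = A1 at *
      generalize (s.val u).2 = B1 at *
      generalize (t.val u).1 = A2 at *
      generalize (t.val u).2 = B2 at *
      generalize pathPoly (s.rank + 1) u = P at *
      generalize pathPoly (t.rank + 1) u = Q at *
      generalize pathPoly s.rank u = P' at *
      generalize pathPoly t.rank u = Q' at *
      have e1 : (P' - P) * A1 ≤ (B1 - A1) * P := by linarith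
      have e2 : (Q' - Q) * A2 ≤ (B2 - A2) * Q := by linarith
      have e3 : ((P' - P) * A1) * ((Q' - Q) * A2) ≤ ((B1 - A1) * P) * ((B2 - A2) * Q) :=
        mul_le_mul e1 e2 (mul_nonneg (by linarith) f2.le)
          ((mul_nonneg (by linarith) f1.le).trans e1)
      have e4 : (A1 * B2 + B1 * A2 - B1 * B2) * (P * Q) ≤
          A1 * A2 * (P * Q' + P' * Q - P' * Q') := by nlinarith
      have hPQ : 0 < P * Q := by positivity
      have hpos : 0 < P * Q' + P' * Q - P' * Q' := by
        have : 0 < A1 * A2 * (P * Q' + P' * Q - P' * Q') := lt_of_lt_of_le (by positivity) e4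
        exact (mul_pos_iff_of_pos_left (by positivity)).1 this
      have e5 : A1 * A2 ≤ P * Q := mul_le_mul a1 b1 f2.le p1.le
      have e6 := mul_le_mul_of_nonneg_right e5 hpos.le
      exact le_of_mul_le_mul_right (by linarith) hPQ
    have third := pathPoly_pos (m := (join s t).rank) hx
      fun u hu hu0 => lt_of_lt_of_le (h u hu hu0) (first u hu hu0)
    refine ⟨first x le_rfl hx, ?_, third⟩
    obtain ⟨a1, a2, a3⟩ := hs x hx fun v hv hv0 => (hf v hv hv0).1
    obtain ⟨b1, b2, b3⟩ := ht x hx fun v hv hv0 => (hf v hv hv0).2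
    have hA := h x le_rfl hx
    obtain ⟨f1, f2⟩ := hf x le_rfl hx
    have g1 := (s.dominated x hx fun v hv hv0 => (hf v hv hv0).1).1
    have p1 := a3 s.rank (by omega)
    have q1 := b3 _ le_rfl
    have q2 := pathPoly_anti hx b3
    have p2 := pathPoly_anti hx a3
    -- submultiplicativity of the path polynomials
    have hsub : pathPoly (join s t).rank x ≤ pathPoly s.rank x * pathPoly (t.rank + 1) x := by
      rw [show (join s t).rank = s.rank + t.rank + 1 from rfl]
      rcases hr : s.rank with _ | r
      · simp [pathPoly]
      · rw [hr] at a3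
        rw [show r + 1 + t.rank + 1 = r + t.rank + 2 by ring, pathPoly_add]
        nlinarith [pathPoly_anti (m := r) hx fun i hi => a3 i (by omega)]
    rw [show (join s t).rank + 1 = s.rank + t.rank + 2 from rfl, pathPoly_add]
    refine (mul_le_mul_of_nonneg_right hsub hA.le).trans ?_
    simp only [val]
    have q3 := b3 t.rank (by omega)
    clear hsub third first hA a3 b3
    generalize (s.val x).1 = A1 at *
    generalize (s.val x).2 = B1 at *
    generalize (t.val x).1 = A2 at *
    generalize (t.val x).2 = B2 at *
    generalize pathPoly (s.rank + 1) x = P at *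
    generalize pathPoly (t.rank + 1) x = Q at *
    generalize pathPoly s.rank x = P' at *
    generalize pathPoly t.rank x = Q' at *
    have e1 : (P' - P) * B1 ≤ (B1 - A1) * P' := by linarith
    have e3 : (Q' * A2) * ((P' - P) * B1) ≤ (B2 * Q) * ((B1 - A1) * P') :=
      mul_le_mul b2 e1 (mul_nonneg (by linarith) g1.le)
        ((mul_nonneg q3.le f2.le).trans b2)
    linarith

end RTree

/-! ### Independence polynomials of induced subgraphs and rooted trees -/

section Polynomial

open Classical

set_option linter.unusedSectionVars false

variable {V : Type*} [DecidableEq V] {G : SimpleGraph V}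

/-- The independence polynomial of the subgraph of `G` induced on `S`, evaluated at `x`. -/
noncomputable def indW (G : SimpleGraph V) (S : Finset V) (x : ℝ) : ℝ :=
  ∑ s ∈ S.powerset, if IsIndepFinset G s then x ^ s.card else 0

/-- The vertices of `S` outside the closed neighbourhood of `r`. -/
noncomputable def outside (G : SimpleGraph V) (S : Finset V) (r : V) : Finset V :=
  (S.erase r).filter fun v => ¬ G.Adj r v

lemma mem_outside {S : Finset V} {r v : V} :
    v ∈ outside G S r ↔ v ∈ S ∧ v ≠ r ∧ ¬ G.Adj r v := by
  simp only [outside, Finset.mem_filter, Finset.mem_erase]; tauto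

lemma eval_indepPoly {V : Type*} [Fintype V] (G : SimpleGraph V) (x : ℝ) :
    (indepPoly G).eval x = indW G Finset.univ x := by
  simp only [indepPoly, indW, Polynomial.eval_finsetSum, Finset.powerset_univ]
  refine Finset.sum_congr rfl fun s _ => ?_
  split_ifs <;> simp

lemma IsIndepFinset.mono {s t : Finset V} (h : IsIndepFinset G t) (hst : s ⊆ t) :
    IsIndepFinset G s := fun u hu v hv => h u (hst hu) v (hst hv)

lemma isIndepFinset_insert {s : Finset V} {v : V} :
    IsIndepFinset G (insert v s) ↔ IsIndepFinset G s ∧ ∀ u ∈ s, ¬ G.Adj v u := by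
  constructor
  · intro h
    exact ⟨h.mono (Finset.subset_insert _ _), fun u hu =>
      h v (Finset.mem_insert_self _ _) u (Finset.mem_insert_of_mem hu)⟩
  · rintro ⟨h1, h2⟩ a ha b hb hab
    rcases Finset.mem_insert.1 ha with rfl | ha <;> rcases Finset.mem_insert.1 hb with rfl | hb
    · exact G.irrefl hab
    · exact h2 b hb hab
    · exact h2 a ‹a ∈ s› hab.symm
    · exact h1 a ha b hb hab

lemma indW_empty (x : ℝ) : indW G ∅ x = 1 := by
  simp [indW, IsIndepFinset]

lemma indW_erase {S : Finset V} {v : V} (hv : v ∈ S) (x : ℝ) :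
    indW G S x = indW G (S.erase v) x + x * indW G (outside G S v) x := by
  conv_lhs => rw [← Finset.insert_erase hv]
  rw [indW, Finset.sum_powerset_insert (Finset.notMem_erase v S)]
  congr 1
  rw [indW, Finset.mul_sum]
  symm
  refine Finset.sum_subset_zero_on_sdiff (Finset.powerset_mono.2 (Finset.filter_subset _ _)) ?_ ?_
  · intro t ht
    rw [if_neg]
    intro hind
    rw [Finset.mem_sdiff, Finset.mem_powerset, Finset.mem_powerset] at ht
    refine ht.2 fun u hu => Finset.mem_filter.2 ⟨ht.1 hu, (isIndepFinset_insert.1 hind).2 u hu⟩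
  · intro t ht
    rw [Finset.mem_powerset] at ht
    have hvt : v ∉ t := fun h => by simpa [outside] using ht h
    have h2 : ∀ u ∈ t, ¬ G.Adj v u := fun u hu => (mem_outside.1 (ht hu)).2.2
    rw [Finset.card_insert_of_notMem hvt]
    simp only [isIndepFinset_insert, and_iff_left h2]
    split_ifs
    · ring
    · ring

lemma indW_union {S T : Finset V} (hd : Disjoint S T) (hc : ∀ a ∈ S, ∀ b ∈ T, ¬ G.Adj a b)
    (x : ℝ) : indW G (S ∪ T) x = indW G S x * indW G T x := by
  induction S using Finset.strongInduction with
  | H S ih =>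
    rcases S.eq_empty_or_nonempty with rfl | ⟨v, hv⟩
    · simp [indW_empty]
    · have hvT : v ∉ T := Finset.disjoint_left.1 hd hv
      have e1 : (S ∪ T).erase v = S.erase v ∪ T := by
        ext a; by_cases h : a = v <;> simp [h, hvT]
      have e2 : outside G (S ∪ T) v = outside G S v ∪ T := by
        ext a
        simp only [mem_outside, Finset.mem_union]
        have := hc v hv a
        by_cases h : a = v
        · subst h; simp [hvT]
        · tauto
      have s1 : outside G S v ⊆ S.erase v := Finset.filter_subset _ _
      have s2 : S.erase v ⊆ S := Finset.erase_subset _ _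
      rw [indW_erase (Finset.mem_union_left _ hv), e1, e2, indW_erase (S := S) hv,
        ih _ (Finset.erase_ssubset hv) (hd.mono_left s2) fun a ha => hc a (s2 ha),
        ih _ (lt_of_le_of_lt s1 (Finset.erase_ssubset hv)) (hd.mono_left (s1.trans s2))
          fun a ha => hc a (s2 (s1 ha))]
      ring

lemma indW_singleton (v : V) (x : ℝ) : indW G {v} x = 1 + x := by
  have : outside G {v} v = ∅ := by ext a; simp +contextual [mem_outside]
  rw [indW_erase (Finset.mem_singleton_self v), this]
  simp [indW_empty]

/-- The independent subsets of `S` avoiding, respectively containing, the vertex `r` are counted by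
the rooted tree `τ` after the substitution `x ↦ x / (1 + x)`, up to the factors `(1 + x) ^ a` and
`(1 + x) ^ b`. -/
def TreeRep (G : SimpleGraph V) (S : Finset V) (r : V) (τ : RTree) (a b : ℕ) : Prop :=
  ∀ x : ℝ, -1 < x →
    indW G (S.erase r) x = (1 + x) ^ a * (τ.val (x / (1 + x))).2 ∧
    x * indW G (outside G S r) x =
      (1 + x) ^ b * ((τ.val (x / (1 + x))).1 - (τ.val (x / (1 + x))).2)

lemma TreeRep.total {S : Finset V} {r : V} {τ : RTree} {a : ℕ} (h : TreeRep G S r τ a a) (hr : r ∈ S)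
    {x : ℝ} (hx : -1 < x) : indW G S x = (1 + x) ^ a * (τ.val (x / (1 + x))).1 := by
  rw [indW_erase hr, (h x hx).1, (h x hx).2]; ring

lemma rep_singleton (r : V) : TreeRep G {r} r .leaf 0 1 := by
  intro x hx
  have h1 : outside G {r} r = ∅ := by ext a; simp +contextual [mem_outside]
  have h2 : 1 + x ≠ 0 := by linarith
  rw [h1]
  simp only [Finset.erase_singleton, indW_empty, RTree.val]
  constructor
  · ring
  · field_simp; ring

lemma TreeRep.addLeaf {S : Finset V} {r l : V} {τ : RTree} {a b : ℕ} (h : TreeRep G S r τ a b)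
    (hl : l ∉ S) (hr : r ∈ S) (hadj : ∀ v ∈ S, G.Adj l v ↔ v = r) :
    TreeRep G (insert l S) r τ (a + 1) b := by
  intro x hx
  have hlr : l ≠ r := fun e => hl (e ▸ hr)
  have e1 : (insert l S).erase r = {l} ∪ S.erase r := by
    ext a; by_cases h : a = r
    · subst h; simp [hlr.symm]
    · simp [h]
  have e2 : outside G (insert l S) r = outside G S r := by
    ext a
    simp only [mem_outside, Finset.mem_insert]
    have := (hadj r hr).2 rfl
    constructor
    · rintro ⟨rfl | h1, h2, h3⟩
      · exact absurd this.symm h3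
      · exact ⟨h1, h2, h3⟩
    · tauto
  rw [e1, e2, indW_union, indW_singleton, (h x hx).1, (h x hx).2]
  · constructor <;> ring
  · rw [Finset.disjoint_singleton_left]; simp [hl]
  · intro u hu v hv huv
    rw [Finset.mem_singleton] at hu
    subst hu
    rw [Finset.mem_erase] at hv
    exact hv.1 ((hadj v hv.2).1 huv)

lemma TreeRep.join {S T : Finset V} {r q : V} {σ τ : RTree} {a b c : ℕ} (h : TreeRep G S r σ a b)
    (h' : TreeRep G T q τ c c) (hd : Disjoint S T) (hr : r ∈ S) (hq : q ∈ T)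
    (hadj : ∀ u ∈ S, ∀ v ∈ T, G.Adj u v ↔ u = r ∧ v = q) :
    TreeRep G (S ∪ T) r (.join σ τ) (a + c) (b + c) := by
  intro x hx
  have hrT : r ∉ T := Finset.disjoint_left.1 hd hr
  have e1 : (S ∪ T).erase r = S.erase r ∪ T := by
    ext a; by_cases h : a = r <;> simp [h, hrT]
  have e2 : outside G (S ∪ T) r = outside G S r ∪ T.erase q := by
    ext u
    simp only [mem_outside, Finset.mem_union, Finset.mem_erase]
    have := hadj r hr u
    by_cases h : u = r
    · subst h; simp [hrT]
    · tauto
  have s1 : outside G S r ⊆ S.erase r := Finset.filter_subset _ _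
  have s2 : S.erase r ⊆ S := Finset.erase_subset _ _
  have s3 : T.erase q ⊆ T := Finset.erase_subset _ _
  rw [e1, e2, indW_union (hd.mono_left s2), indW_union (hd.mono (s1.trans s2) s3), h'.total hq hx,
    (h x hx).1, (h' x hx).1, ← mul_assoc x, (h x hx).2]
  · simp only [RTree.val]
    constructor <;> ring
  · intro u hu v hv huv
    exact Finset.ne_of_mem_erase (s1 hu) ((hadj u (s2 (s1 hu)) v (s3 hv)).1 huv).1
  · intro u hu v hv huv
    exact Finset.ne_of_mem_erase hu ((hadj u (s2 hu) v hv).1 huv).1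

/-- A triangle `c₁ c₂ c₃` whose vertex `c₃` carries a rooted tree: the vertex `c₂` disappears. -/
lemma TreeRep.triangle {S : Finset V} {c₁ c₂ c₃ : V} {τ : RTree} {a : ℕ} (h : TreeRep G S c₃ τ a (a + 1))
    (h₃ : c₃ ∈ S) (h₂ : c₂ ∉ S) (h₁ : c₁ ∉ S) (h₁₂ : G.Adj c₁ c₂)
    (hadj₂ : ∀ v ∈ S, G.Adj c₂ v ↔ v = c₃) (hadj₁ : ∀ v ∈ S, G.Adj c₁ v ↔ v = c₃) :
    TreeRep G (insert c₁ (insert c₂ S)) c₁ (.join .leaf τ) (a + 1) (a + 1) := by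
  intro x hx
  have hx' : 1 + x ≠ 0 := by linarith
  have e1 : (insert c₁ (insert c₂ S)).erase c₁ = insert c₂ S :=
    Finset.erase_insert (by simp [h₁, h₁₂.ne])
  have e2 : outside G (insert c₁ (insert c₂ S)) c₁ = S.erase c₃ := by
    ext u
    simp only [mem_outside, Finset.mem_insert, Finset.mem_erase]
    have := hadj₁ u
    constructor
    · rintro ⟨rfl | rfl | h1, h2, h3⟩ <;> tauto
    · rintro ⟨h1, h2⟩
      refine ⟨by tauto, fun e => h₁ (e ▸ h2), by tauto⟩
  rw [e1, e2, (h.addLeaf h₂ h₃ hadj₂).total (Finset.mem_insert_of_mem h₃) hx, (h x hx).1]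
  simp only [RTree.val]
  constructor
  · ring
  · field_simp; ring

/-- A pentagon `c₁ c₂ c₃ c₄ c₅` whose vertex `c₃` carries a rooted tree: the vertices `c₄` and `c₅`
disappear. -/
lemma TreeRep.pentagon {S : Finset V} {c₁ c₂ c₃ c₄ c₅ : V} {τ : RTree} {a : ℕ}
    (h : TreeRep G S c₃ τ a (a + 1)) (h₃ : c₃ ∈ S) (h₁ : c₁ ∉ S) (h₂ : c₂ ∉ S) (h₄ : c₄ ∉ S)
    (h₅ : c₅ ∉ S) (h₁₂ : G.Adj c₁ c₂) (h₄₅ : G.Adj c₄ c₅) (h₅₁ : G.Adj c₅ c₁)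
    (h₁₄ : c₁ ≠ c₄) (n₁₄ : ¬ G.Adj c₁ c₄) (h₂₄ : c₂ ≠ c₄) (n₂₄ : ¬ G.Adj c₂ c₄)
    (h₂₅ : c₂ ≠ c₅) (n₂₅ : ¬ G.Adj c₂ c₅)
    (hadj₁ : ∀ v ∈ S, ¬ G.Adj c₁ v) (hadj₂ : ∀ v ∈ S, G.Adj c₂ v ↔ v = c₃)
    (hadj₄ : ∀ v ∈ S, G.Adj c₄ v ↔ v = c₃) (hadj₅ : ∀ v ∈ S, ¬ G.Adj c₅ v) :
    TreeRep G (insert c₁ (insert c₂ S ∪ insert c₅ {c₄})) c₁ (.join .leaf (.join .leaf τ))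
      (a + 2) (a + 2) := by
  intro x hx
  have hx' : 1 + x ≠ 0 := by linarith
  have e1 : (insert c₁ (insert c₂ S ∪ insert c₅ {c₄})).erase c₁ = insert c₂ S ∪ insert c₅ {c₄} :=
    Finset.erase_insert (by simp [h₁, h₁₂.ne, h₁₄, h₅₁.ne.symm])
  have e2 : outside G (insert c₁ (insert c₂ S ∪ insert c₅ {c₄})) c₁ = insert c₄ S := by
    ext u
    simp only [mem_outside, Finset.mem_insert, Finset.mem_union, Finset.mem_singleton]
    have := hadj₁ u
    have := h₅₁.symm
    constructor
    · rintro ⟨rfl | (rfl | h1) | rfl | rfl, h2, h3⟩ <;> tauto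
    · rintro (rfl | h2)
      · exact ⟨by tauto, h₁₄.symm, n₁₄⟩
      · exact ⟨by tauto, fun e => h₁ (e ▸ h2), by tauto⟩
  have k2 : TreeRep G (insert c₅ {c₄}) c₄ .leaf 1 1 := (rep_singleton c₄).addLeaf
    (by simp [h₄₅.ne.symm]) (by simp) (by simp [h₄₅.symm])
  have j := (h.addLeaf h₂ h₃ hadj₂).join k2 (by
      rw [Finset.disjoint_left]
      intro u hu hu'
      simp only [Finset.mem_insert, Finset.mem_singleton] at hu hu'
      rcases hu with rfl | hu <;> rcases hu' with rfl | rfl <;> tauto)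
    (Finset.mem_insert_of_mem h₃) (by simp) (by
      intro u hu v hv
      simp only [Finset.mem_insert, Finset.mem_singleton] at hu hv
      have := hadj₄ u
      have := hadj₅ u
      rw [G.adj_comm]
      rcases hu with rfl | hu <;> rcases hv with rfl | rfl
      · rw [G.adj_comm]; simp [n₂₅, h₄₅.ne.symm]
      · rw [G.adj_comm]; simp only [n₂₄, false_iff, not_and]; rintro rfl; exact absurd h₃ h₂
      · simp [hadj₅ u hu, h₄₅.ne.symm]
      · simp [hadj₄ u hu])
  rw [e1, e2, j.total (Finset.mem_union_left _ (Finset.mem_insert_of_mem h₃)) hx,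
    (h.addLeaf h₄ h₃ hadj₄).total (Finset.mem_insert_of_mem h₃) hx]
  simp only [RTree.val]
  constructor
  · ring
  · field_simp; ring

end Polynomial

/-! ### Maximal independent sets of induced subgraphs -/

section WellCoveredness

open Classical

set_option linter.unusedSectionVars false

variable {V : Type*} [DecidableEq V] {G : SimpleGraph V}

/-- `M` is a maximal independent set of the subgraph of `G` induced on `S`. -/
def MaxI (G : SimpleGraph V) (S M : Finset V) : Prop :=
  M ⊆ S ∧ IsIndepFinset G M ∧ ∀ v ∈ S, v ∉ M → ∃ u ∈ M, G.Adj u v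

/-- The subgraph of `G` induced on `S` is well-covered with independence number `k`. -/
def WC (G : SimpleGraph V) (S : Finset V) (k : ℕ) : Prop :=
  ∀ M, MaxI G S M → M.card = k

/-- `G[S]` and `G[S] - w` are well-covered with the same independence number. -/
def ExtV (G : SimpleGraph V) (S : Finset V) (w : V) : Prop :=
  ∃ k, WC G S k ∧ WC G (S.erase w) k

/-- `G[S] - r` and `G[S] - N[r]` are well-covered with the same independence number. This is what
remains at `r` once a pendant vertex attached to `r` is removed. -/
def Hc (G : SimpleGraph V) (S : Finset V) (r : V) : Prop :=
  ∃ k, WC G (S.erase r) k ∧ WC G (outside G S r) k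

lemma exists_maxI {S I : Finset V} (hI : IsIndepFinset G I) (hIS : I ⊆ S) :
    ∃ M, I ⊆ M ∧ MaxI G S M := by
  obtain ⟨M, hIM, hM⟩ := (S.powerset.filter (IsIndepFinset G)).exists_le_maximal
    (Finset.mem_filter.2 ⟨Finset.mem_powerset.2 hIS, hI⟩)
  have hM1 := Finset.mem_filter.1 hM.1
  have hMS := Finset.mem_powerset.1 hM1.1
  refine ⟨M, hIM, hMS, hM1.2, fun v hv hvM => ?_⟩
  by_contra! hcon
  have : insert v M ≤ M := hM.2 (Finset.mem_filter.2 ⟨Finset.mem_powerset.2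
    (Finset.insert_subset hv hMS), isIndepFinset_insert.2
      ⟨hM1.2, fun u hu huv => hcon u hu huv.symm⟩⟩) (Finset.subset_insert v M)
  exact hvM (this (Finset.mem_insert_self v M))

lemma isIndepFinset_empty : IsIndepFinset G (∅ : Finset V) := by simp [IsIndepFinset]

lemma isIndepFinset_singleton (v : V) : IsIndepFinset G {v} := by simp [IsIndepFinset]

lemma exists_maxI_mem {S : Finset V} {v : V} (hv : v ∈ S) : ∃ M, v ∈ M ∧ MaxI G S M := by
  obtain ⟨M, h1, h2⟩ := exists_maxI (G := G) (isIndepFinset_singleton v)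
    (Finset.singleton_subset_iff.2 hv)
  exact ⟨M, Finset.singleton_subset_iff.1 h1, h2⟩

lemma exists_maxI' (G : SimpleGraph V) (S : Finset V) : ∃ M, MaxI G S M := by
  obtain ⟨M, -, h2⟩ := exists_maxI (G := G) isIndepFinset_empty (Finset.empty_subset S)
  exact ⟨M, h2⟩

lemma WC.le {S I : Finset V} {k : ℕ} (h : WC G S k) (hI : IsIndepFinset G I) (hIS : I ⊆ S) :
    I.card ≤ k := by
  obtain ⟨M, h1, h2⟩ := exists_maxI hI hIS
  exact (Finset.card_le_card h1).trans (h M h2).le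

lemma WC.le_of_subset {S T : Finset V} {k l : ℕ} (h : WC G S k) (hT : WC G T l) (hTS : T ⊆ S) :
    l ≤ k := by
  obtain ⟨M, hM⟩ := exists_maxI' G T
  rw [← hT M hM]
  exact h.le hM.2.1 (hM.1.trans hTS)

lemma MaxI.union {A B M N : Finset V} (hM : MaxI G A M) (hN : MaxI G B N)
    (hc : ∀ a ∈ M, ∀ b ∈ N, ¬ G.Adj a b) : MaxI G (A ∪ B) (M ∪ N) := by
  refine ⟨Finset.union_subset_union hM.1 hN.1, ?_, ?_⟩
  · intro u hu v hv huv
    rcases Finset.mem_union.1 hu with hu | hu <;> rcases Finset.mem_union.1 hv with hv | hv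
    · exact hM.2.1 u hu v hv huv
    · exact hc u hu v hv huv
    · exact hc v hv u hu huv.symm
    · exact hN.2.1 u hu v hv huv
  · intro v hv hvM
    rw [Finset.mem_union, not_or] at hvM
    rcases Finset.mem_union.1 hv with hv | hv
    · obtain ⟨u, hu, h⟩ := hM.2.2 v hv hvM.1
      exact ⟨u, Finset.mem_union_left _ hu, h⟩
    · obtain ⟨u, hu, h⟩ := hN.2.2 v hv hvM.2
      exact ⟨u, Finset.mem_union_right _ hu, h⟩

/-- Adding vertices that are already dominated does not affect maximality. -/
lemma MaxI.extend {S T M : Finset V} (hM : MaxI G T M) (hTS : T ⊆ S)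
    (hd : ∀ v ∈ S, v ∉ T → ∃ u ∈ M, G.Adj u v) : MaxI G S M := by
  refine ⟨hM.1.trans hTS, hM.2.1, fun v hv hvM => ?_⟩
  by_cases h : v ∈ T
  · exact hM.2.2 v h hvM
  · exact hd v hv h

lemma MaxI.insert {S T M : Finset V} {r : V} (hM : MaxI G T M) (hTS : T ⊆ S) (hr : r ∈ S)
    (hrT : ∀ v ∈ T, ¬ G.Adj r v)
    (hd : ∀ v ∈ S, v ∉ T → v ≠ r → ∃ u ∈ insert r M, G.Adj u v) : MaxI G S (insert r M) := by
  refine ⟨Finset.insert_subset hr (hM.1.trans hTS), isIndepFinset_insert.2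
    ⟨hM.2.1, fun u hu => hrT u (hM.1 hu)⟩, fun v hv hvM => ?_⟩
  rw [Finset.mem_insert, not_or] at hvM
  by_cases h : v ∈ T
  · obtain ⟨u, hu, h⟩ := hM.2.2 v h hvM.2
    exact ⟨u, Finset.mem_insert_of_mem hu, h⟩
  · exact hd v hv h hvM.1

lemma WC.disj {A B : Finset V} {k : ℕ} (h : WC G (A ∪ B) k) (hd : Disjoint A B)
    (hc : ∀ a ∈ A, ∀ b ∈ B, ¬ G.Adj a b) : ∃ k₁ k₂, WC G A k₁ ∧ WC G B k₂ ∧ k₁ + k₂ = k := by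
  obtain ⟨M₀, hM₀⟩ := exists_maxI' G A
  obtain ⟨N₀, hN₀⟩ := exists_maxI' G B
  have key : ∀ M N, MaxI G A M → MaxI G B N → M.card + N.card = k := by
    intro M N hM hN
    rw [← Finset.card_union_of_disjoint (hd.mono hM.1 hN.1)]
    exact h _ (hM.union hN fun a ha b hb => hc a (hM.1 ha) b (hN.1 hb))
  refine ⟨M₀.card, N₀.card, fun M hM => ?_, fun N hN => ?_, key _ _ hM₀ hN₀⟩
  · have := key _ _ hM hN₀; have := key _ _ hM₀ hN₀; omega
  · have := key _ _ hM₀ hN; have := key _ _ hM₀ hN₀; omega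

lemma Hc.split {A B : Finset V} {u : V} (h : Hc G (A ∪ B) u) (hd : Disjoint A B) (hu : u ∈ A)
    (hc : ∀ a ∈ A, ∀ b ∈ B, G.Adj a b → a = u) :
    Hc G A u ∧ ∃ k, WC G B k ∧ WC G (B.filter fun v => ¬ G.Adj u v) k := by
  obtain ⟨k, h1, h2⟩ := h
  have huB : u ∉ B := Finset.disjoint_left.1 hd hu
  have e1 : (A ∪ B).erase u = A.erase u ∪ B := by
    ext a; by_cases h : a = u <;> simp [h, huB]
  have e2 : outside G (A ∪ B) u = outside G A u ∪ B.filter fun v => ¬ G.Adj u v := by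
    ext v
    simp only [mem_outside, Finset.mem_union, Finset.mem_filter]
    by_cases h : v = u
    · subst h; simp [huB]
    · tauto
  have s1 : outside G A u ⊆ A.erase u := Finset.filter_subset _ _
  have s2 : A.erase u ⊆ A := Finset.erase_subset _ _
  have s3 : (B.filter fun v => ¬ G.Adj u v) ⊆ B := Finset.filter_subset _ _
  have c1 : ∀ a ∈ A.erase u, ∀ b ∈ B, ¬ G.Adj a b := fun a ha b hb hab =>
    Finset.ne_of_mem_erase ha (hc a (s2 ha) b hb hab)
  rw [e1] at h1
  rw [e2] at h2
  obtain ⟨k₁, k₂, p1, p2, p3⟩ := h1.disj (hd.mono_left s2) c1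
  obtain ⟨l₁, l₂, q1, q2, q3⟩ := h2.disj (hd.mono (s1.trans s2) s3) fun a ha b hb =>
    c1 a (s1 ha) b (s3 hb)
  -- each part can only lose independence number, and the totals agree
  have := p1.le_of_subset q1 s1
  have := p2.le_of_subset q2 s3
  obtain rfl : l₁ = k₁ := by omega
  obtain rfl : l₂ = k₂ := by omega
  exact ⟨⟨_, p1, q1⟩, _, p2, q2⟩

lemma Hc.split_edge {A B : Finset V} {u b : V} (h : Hc G (A ∪ B) u) (hd : Disjoint A B) (hu : u ∈ A)
    (hc : ∀ a ∈ A, ∀ v ∈ B, G.Adj a v ↔ a = u ∧ v = b) : Hc G A u ∧ ExtV G B b := by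
  obtain ⟨h1, k, h2, h3⟩ := h.split hd hu fun a ha v hv hav => ((hc a ha v hv).1 hav).1
  refine ⟨h1, k, h2, ?_⟩
  convert h3 using 1
  ext v
  simp only [Finset.mem_erase, Finset.mem_filter]
  have := hc u hu v
  tauto

lemma ExtV.split {A B : Finset V} {u b b' : V} (h : ExtV G (A ∪ B) u) (hd : Disjoint A B) (hu : u ∈ A)
    (hb : b ∈ B) (hc : ∀ a ∈ A, ∀ v ∈ B, G.Adj a v ↔ a = u ∧ v = b) (hb' : b' ∈ B)
    (hbb' : G.Adj b b') : ExtV G A u ∧ ExtV G B b := by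
  obtain ⟨k, h1, h2⟩ := h
  have huB : u ∉ B := Finset.disjoint_left.1 hd hu
  have e1 : (A ∪ B).erase u = A.erase u ∪ B := by
    ext a; by_cases h : a = u <;> simp [h, huB]
  rw [e1] at h2
  obtain ⟨k₁, k₂, p1, p2, p3⟩ := h2.disj (hd.mono_left (Finset.erase_subset _ _))
    fun a ha v hv hav => Finset.ne_of_mem_erase ha
      ((hc a (Finset.mem_of_mem_erase ha) v hv).1 hav).1
  have key : ∀ M N, MaxI G A M → u ∈ M → MaxI G (B.erase b) N → M.card + N.card = k := by
    intro M N hM huM hN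
    have hNB := hN.1.trans (Finset.erase_subset _ _)
    rw [← Finset.card_union_of_disjoint (hd.mono hM.1 hNB)]
    refine h1 _ (MaxI.extend (hM.union hN ?_) (by gcongr; exact Finset.erase_subset _ _) ?_)
    · intro a ha v hv hav
      exact Finset.ne_of_mem_erase (hN.1 hv) ((hc a (hM.1 ha) v (hNB hv)).1 hav).2
    · intro v hv hv'
      obtain rfl : v = b := by
        by_contra hne
        simp only [Finset.mem_union, Finset.mem_erase] at hv hv'
        tauto
      exact ⟨u, Finset.mem_union_left _ huM, (hc u hu v hb).2 ⟨rfl, rfl⟩⟩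
  obtain ⟨N₀, hb'N, hN₀⟩ := exists_maxI_mem (G := G) (Finset.mem_erase.2 ⟨hbb'.ne', hb'⟩)
  have hN₀c : N₀.card = k₂ := p2 _ (hN₀.extend (Finset.erase_subset _ _) fun v hv hv' => by
    obtain rfl : v = b := by
      by_contra hne
      exact hv' (Finset.mem_erase.2 ⟨hne, hv⟩)
    exact ⟨b', hb'N, hbb'.symm⟩)
  have hA : WC G A k₁ := by
    intro M hM
    by_cases huM : u ∈ M
    · have := key M N₀ hM huM hN₀
      omega
    · exact p1 M ⟨fun a ha => Finset.mem_erase.2 ⟨fun e => huM (e ▸ ha), hM.1 ha⟩, hM.2.1,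
        fun v hv => hM.2.2 v (Finset.mem_of_mem_erase hv)⟩
  obtain ⟨M₀, huM, hM₀⟩ := exists_maxI_mem (G := G) hu
  refine ⟨⟨k₁, hA, p1⟩, k₂, p2, fun N hN => ?_⟩
  have := key M₀ N hM₀ huM hN
  have := hA _ hM₀
  omega

lemma WC.leaf {S : Finset V} {l w : V} {k : ℕ} (h : WC G (insert l S) k) (hl : l ∉ S) (hw : w ∈ S)
    (hadj : ∀ v ∈ S, G.Adj l v ↔ v = w) : Hc G S w ∧ ExtV G (insert l S) w := by
  have hlw : l ≠ w := fun e => hl (e ▸ hw)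
  have hlw' := (hadj w hw).2 rfl
  refine ⟨⟨k - 1, fun M hM => ?_, fun M hM => ?_⟩, k, h, fun M hM => ?_⟩
  · have hlM : l ∉ M := fun e => hl (Finset.mem_of_mem_erase (hM.1 e))
    rw [← h _ (hM.insert (r := l) (S := insert l S) ?_ (Finset.mem_insert_self _ _) ?_ ?_),
      Finset.card_insert_of_notMem hlM, Nat.add_sub_cancel]
    · exact (Finset.erase_subset _ _).trans (Finset.subset_insert _ _)
    · intro v hv hlv
      exact Finset.ne_of_mem_erase hv ((hadj v (Finset.mem_of_mem_erase hv)).1 hlv)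
    · intro v hv hv' hvl
      refine ⟨l, Finset.mem_insert_self _ _, ?_⟩
      simp only [Finset.mem_insert, Finset.mem_erase] at hv hv'
      obtain rfl : v = w := by tauto
      exact hlw'
  · have hlM : w ∉ M := fun e => (mem_outside.1 (hM.1 e)).2.1 rfl
    rw [← h _ (hM.insert (r := w) (S := insert l S) ?_ (Finset.mem_insert_of_mem hw) ?_ ?_),
      Finset.card_insert_of_notMem hlM, Nat.add_sub_cancel]
    · intro v hv
      exact Finset.mem_insert_of_mem (mem_outside.1 hv).1
    · intro v hv
      exact (mem_outside.1 hv).2.2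
    · intro v hv hv' hvl
      refine ⟨w, Finset.mem_insert_self _ _, ?_⟩
      rcases Finset.mem_insert.1 hv with rfl | hv
      · exact hlw'.symm
      · rw [mem_outside] at hv'; tauto
  · have hlS : l ∈ (insert l S).erase w := Finset.mem_erase.2 ⟨hlw, Finset.mem_insert_self _ _⟩
    have hlM : l ∈ M := by
      by_contra hlM
      obtain ⟨u, hu, hul⟩ := hM.2.2 l hlS hlM
      have := Finset.mem_erase.1 (hM.1 hu)
      have huS : u ∈ S := (Finset.mem_insert.1 this.2).resolve_left hul.ne
      exact this.1 ((hadj u huS).1 hul.symm)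
    refine h M (hM.extend (Finset.erase_subset _ _) fun v hv hv' => ⟨l, hlM, ?_⟩)
    obtain rfl : v = w := by
      by_contra hne
      exact hv' (Finset.mem_erase.2 ⟨hne, hv⟩)
    exact hlw'

lemma WellCovered.exists_WC {V : Type*} [Fintype V] {G : SimpleGraph V} (h : WellCovered G) :
    ∃ k, WC G Finset.univ k := by
  have conv : ∀ M, MaxI G Finset.univ M → ∀ v ∉ M, ¬ IsIndepFinset G (insert v M) := by
    intro M hM v hv hind
    obtain ⟨u, hu, huv⟩ := hM.2.2 v (Finset.mem_univ v) hv
    exact (isIndepFinset_insert.1 hind).2 u hu huv.symm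
  obtain ⟨M₀, hM₀⟩ := exists_maxI' G Finset.univ
  exact ⟨M₀.card, fun M hM => h M M₀ hM.2.1 (conv M hM) hM₀.2.1 (conv M₀ hM₀)⟩

end WellCoveredness

/-! ### Connected induced subgraphs and edge counts -/

section Connectivity

open Classical

set_option linter.unusedSectionVars false

variable {V : Type*} [DecidableEq V] {G : SimpleGraph V}

/-- `G[S]` is connected: no proper nonempty part of `S` is closed under adjacency in `S`. -/
def Conn (G : SimpleGraph V) (S : Finset V) : Prop :=
  S.Nonempty ∧ ∀ T ⊆ S, T.Nonempty → (∀ a ∈ T, ∀ b ∈ S, G.Adj a b → b ∈ T) → T = S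

/-- The number of neighbours of `a` in `S`. -/
noncomputable def degIn (G : SimpleGraph V) (S : Finset V) (a : V) : ℕ := (S.filter (G.Adj a)).card

/-- The degree sum of `G[S]`, that is, twice its number of edges. -/
noncomputable def degSum (G : SimpleGraph V) (S : Finset V) : ℕ := ∑ a ∈ S, degIn G S a

/-- `A` and `B` are joined by the single edge `u b`. -/
def Bridge (G : SimpleGraph V) (A B : Finset V) (u b : V) : Prop :=
  Disjoint A B ∧ u ∈ A ∧ b ∈ B ∧ ∀ a ∈ A, ∀ v ∈ B, G.Adj a v ↔ a = u ∧ v = b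

/-- `G[S]` is a tree. -/
def TreeOn (G : SimpleGraph V) (S : Finset V) : Prop := Conn G S ∧ degSum G S + 2 = 2 * S.card

/-- `G[S]` is unicyclic. -/
def UniOn (G : SimpleGraph V) (S : Finset V) : Prop := Conn G S ∧ degSum G S = 2 * S.card

lemma Conn.exists_adj {S : Finset V} {u : V} (h : Conn G S) (hu : u ∈ S) (hS : S ≠ {u}) :
    ∃ b ∈ S, G.Adj u b := by
  by_contra! hcon
  refine hS (h.2 {u} (Finset.singleton_subset_iff.2 hu) (Finset.singleton_nonempty u) ?_).symm
  intro a ha b hb hab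
  rw [Finset.mem_singleton] at ha
  subst ha
  exact absurd hab (hcon b hb)

lemma Conn.left {A B : Finset V} {u : V} (h : Conn G (A ∪ B)) (hd : Disjoint A B) (hu : u ∈ A)
    (hc : ∀ a ∈ A, ∀ v ∈ B, G.Adj a v → a = u) : Conn G A := by
  refine ⟨⟨u, hu⟩, fun T hT hne hcl => ?_⟩
  by_cases huT : u ∈ T
  · have : T ∪ B = A ∪ B := by
      refine h.2 _ (by gcongr) (hne.mono Finset.subset_union_left) ?_
      intro a ha b hb hab
      rcases Finset.mem_union.1 hb with hb | hb
      · rcases Finset.mem_union.1 ha with ha | ha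
        · exact Finset.mem_union_left _ (hcl a ha b hb hab)
        · rw [hc b hb a ha hab.symm]
          exact Finset.mem_union_left _ huT
      · exact Finset.mem_union_right _ hb
    refine hT.antisymm fun a ha => ?_
    have h1 : a ∈ T ∪ B := this ▸ Finset.mem_union_left _ ha
    exact (Finset.mem_union.1 h1).resolve_right (Finset.disjoint_left.1 hd ha)
  · have : T = A ∪ B := by
      refine h.2 T (hT.trans Finset.subset_union_left) hne ?_
      intro a ha b hb hab
      rcases Finset.mem_union.1 hb with hb | hb
      · exact hcl a ha b hb hab
      · exact absurd (hc a (hT ha) b hb hab ▸ ha) huT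
    exact absurd (this ▸ Finset.mem_union_left _ hu) huT

/-- The connected component of `b` in `G[R]`. -/
lemma exists_component {R : Finset V} {b : V} (hb : b ∈ R) :
    ∃ C ⊆ R, b ∈ C ∧ Conn G C ∧ ∀ a ∈ C, ∀ v ∈ R, G.Adj a v → v ∈ C := by
  let F := R.powerset.filter fun C => b ∈ C ∧ ∀ a ∈ C, ∀ v ∈ R, G.Adj a v → v ∈ C
  have hF : F.Nonempty := ⟨R, by simp [F, hb]; tauto⟩
  obtain ⟨C, hC, hmin⟩ := F.exists_min_image Finset.card hF
  simp only [F, Finset.mem_filter, Finset.mem_powerset] at hC hmin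
  obtain ⟨hCR, hbC, hcl⟩ := hC
  refine ⟨C, hCR, hbC, ⟨⟨b, hbC⟩, fun T hT hne hTcl => ?_⟩, hcl⟩
  by_cases hbT : b ∈ T
  · refine Finset.eq_of_subset_of_card_le hT (hmin T ⟨hT.trans hCR, hbT, ?_⟩)
    exact fun a ha v hv hav => hTcl a ha v (hcl a (hT ha) v hv hav) hav
  · exfalso
    have := hmin (C \ T) ⟨Finset.sdiff_subset.trans hCR, Finset.mem_sdiff.2 ⟨hbC, hbT⟩, ?_⟩
    · have h2 := Finset.card_sdiff_of_subset hT
      have h3 := hne.card_pos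
      have h4 := Finset.card_le_card hT
      omega
    · intro a ha v hv hav
      rw [Finset.mem_sdiff] at ha ⊢
      refine ⟨hcl a ha.1 v hv hav, fun hvT => ha.2 (hTcl v hvT a ha.1 hav.symm)⟩

/-- Splitting off, at a vertex `u`, the branch that contains its neighbour `b`. -/
lemma Conn.split {S : Finset V} {u b : V} (h : Conn G S) (hu : u ∈ S) (hb : b ∈ S)
    (hub : G.Adj u b) : ∃ A B, S = A ∪ B ∧ Disjoint A B ∧ u ∈ A ∧ b ∈ B ∧ Conn G A ∧ Conn G B ∧
      ∀ a ∈ A, ∀ v ∈ B, G.Adj a v → a = u := by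
  obtain ⟨C, hC, hbC, hconn, hcl⟩ := exists_component (G := G) (Finset.mem_erase.2 ⟨hub.ne', hb⟩)
  have hCS : C ⊆ S := hC.trans (Finset.erase_subset _ _)
  have hd : Disjoint (S \ C) C := Finset.sdiff_disjoint
  have hS : S = S \ C ∪ C := (Finset.sdiff_union_of_subset hCS).symm
  have huC : u ∉ C := fun e => Finset.ne_of_mem_erase (hC e) rfl
  have huA : u ∈ S \ C := Finset.mem_sdiff.2 ⟨hu, huC⟩
  have hc : ∀ a ∈ S \ C, ∀ v ∈ C, G.Adj a v → a = u := by
    intro a ha v hv hav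
    by_contra hne
    rw [Finset.mem_sdiff] at ha
    exact ha.2 (hcl v hv a (Finset.mem_erase.2 ⟨hne, ha.1⟩) hav.symm)
  exact ⟨S \ C, C, hS, hd, huA, hbC, Conn.left (hS ▸ h) hd huA hc, hconn, hc⟩

lemma degSum_union {A B : Finset V} {u : V} (hd : Disjoint A B) (hu : u ∈ A)
    (hc : ∀ a ∈ A, ∀ v ∈ B, G.Adj a v → a = u) :
    degSum G (A ∪ B) = degSum G A + degSum G B + 2 * degIn G B u := by
  have h1 : ∀ a, degIn G (A ∪ B) a = degIn G A a + degIn G B a := by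
    intro a
    rw [degIn, Finset.filter_union, Finset.card_union_of_disjoint
      (hd.mono (Finset.filter_subset _ _) (Finset.filter_subset _ _))]
    rfl
  have h2 : ∑ a ∈ A, degIn G B a = degIn G B u := by
    refine Finset.sum_eq_single_of_mem u hu fun a ha hne => ?_
    rw [degIn, Finset.card_eq_zero, Finset.filter_eq_empty_iff]
    exact fun v hv hav => hne (hc a ha v hv hav)
  have h3 : ∑ a ∈ B, degIn G A a = degIn G B u := by
    rw [← h2]
    simp only [degIn, Finset.card_filter]
    rw [Finset.sum_comm]
    simp only [G.adj_comm]
  simp only [degSum, Finset.sum_union hd, h1, Finset.sum_add_distrib, h2, h3]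
  ring

lemma degSum_singleton (u : V) : degSum G {u} = 0 := by
  simp [degSum, degIn, Finset.filter_singleton]

lemma degIn_pos {S : Finset V} {u b : V} (hb : b ∈ S) (hub : G.Adj u b) : 0 < degIn G S u :=
  Finset.card_pos.2 ⟨b, Finset.mem_filter.2 ⟨hb, hub⟩⟩

lemma Conn.le_degSum {S : Finset V} (h : Conn G S) : 2 * S.card ≤ degSum G S + 2 := by
  induction S using Finset.strongInduction with
  | H S ih =>
    obtain ⟨u, hu⟩ := h.1
    by_cases hS : S = {u}
    · subst hS; simp
    · obtain ⟨b, hb, hub⟩ := h.exists_adj hu hS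
      obtain ⟨A, B, rfl, hd, huA, hbB, hA, hB, hc⟩ := h.split hu hb hub
      have huB : u ∉ B := Finset.disjoint_left.1 hd huA
      have hbA : b ∉ A := Finset.disjoint_right.1 hd hbB
      have h1 := ih A (Finset.ssubset_iff_subset_ne.2 ⟨Finset.subset_union_left, fun e =>
        hbA (e ▸ Finset.mem_union_right _ hbB)⟩) hA
      have h2 := ih B (Finset.ssubset_iff_subset_ne.2 ⟨Finset.subset_union_right, fun e =>
        huB (e ▸ Finset.mem_union_left _ huA)⟩) hB
      rw [degSum_union hd huA hc, Finset.card_union_of_disjoint hd]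
      have := degIn_pos hbB hub
      omega

lemma bridge_of_degIn {A B : Finset V} {u b : V} (hd : Disjoint A B) (hu : u ∈ A) (hb : b ∈ B)
    (hc : ∀ a ∈ A, ∀ v ∈ B, G.Adj a v → a = u) (hub : G.Adj u b) (h : degIn G B u = 1) :
    Bridge G A B u b := by
  refine ⟨hd, hu, hb, fun a ha v hv => ⟨fun hav => ?_, ?_⟩⟩
  · obtain rfl := hc a ha v hv hav
    refine ⟨rfl, ?_⟩
    obtain ⟨c, hc⟩ := Finset.card_eq_one.1 h
    have h1 : v ∈ ({c} : Finset V) := hc ▸ Finset.mem_filter.2 ⟨hv, hav⟩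
    have h2 : b ∈ ({c} : Finset V) := hc ▸ Finset.mem_filter.2 ⟨hb, hub⟩
    rw [Finset.mem_singleton] at h1 h2
    rw [h1, h2]
  · rintro ⟨rfl, rfl⟩; exact hub

lemma Bridge.adj {A B : Finset V} {u b : V} (h : Bridge G A B u b) : G.Adj u b :=
  (h.2.2.2 u h.2.1 b h.2.2.1).2 ⟨rfl, rfl⟩

lemma Bridge.symm {A B : Finset V} {u b : V} (h : Bridge G A B u b) : Bridge G B A b u :=
  ⟨h.1.symm, h.2.2.1, h.2.1, fun a ha v hv => by rw [G.adj_comm, h.2.2.2 v hv a ha, and_comm]⟩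

lemma Bridge.degIn_eq {A B : Finset V} {u b : V} (h : Bridge G A B u b) : degIn G B u = 1 := by
  rw [degIn, Finset.card_eq_one]
  refine ⟨b, ?_⟩
  ext v
  simp only [Finset.mem_filter, Finset.mem_singleton]
  constructor
  · rintro ⟨h1, h2⟩; exact ((h.2.2.2 u h.2.1 v h1).1 h2).2
  · rintro rfl; exact ⟨h.2.2.1, h.adj⟩

lemma Bridge.degSum_eq {A B : Finset V} {u b : V} (h : Bridge G A B u b) :
    degSum G (A ∪ B) = degSum G A + degSum G B + 2 := by
  rw [degSum_union h.1 h.2.1 fun a ha v hv hav => ((h.2.2.2 a ha v hv).1 hav).1, h.degIn_eq]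

lemma Bridge.conn_left {A B : Finset V} {u b : V} (h : Bridge G A B u b) (hc : Conn G (A ∪ B)) :
    Conn G A := hc.left h.1 h.2.1 fun a ha v hv hav => ((h.2.2.2 a ha v hv).1 hav).1

lemma Bridge.uni_left {A B : Finset V} {u b : V} (h : Bridge G A B u b) (hU : UniOn G (A ∪ B))
    (hB : TreeOn G B) : UniOn G A := by
  refine ⟨h.conn_left hU.1, ?_⟩
  have h1 := hU.2
  have h2 := hB.2
  rw [h.degSum_eq, Finset.card_union_of_disjoint h.1] at h1
  omega

lemma Bridge.tree_left {A B : Finset V} {u b : V} (h : Bridge G A B u b) (hU : TreeOn G (A ∪ B))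
    (hB : TreeOn G B) : TreeOn G A := by
  refine ⟨h.conn_left hU.1, ?_⟩
  have h1 := hU.2
  have h2 := hB.2
  rw [h.degSum_eq, Finset.card_union_of_disjoint h.1] at h1
  omega

lemma treeOn_singleton (u : V) : TreeOn G {u} := by
  refine ⟨⟨Finset.singleton_nonempty u, fun T hT hne _ => ?_⟩, by simp [degSum_singleton]⟩
  exact (Finset.subset_singleton_iff.1 hT).resolve_left hne.ne_empty

lemma TreeOn.split {S : Finset V} {u b : V} (h : TreeOn G S) (hu : u ∈ S) (hb : b ∈ S)
    (hub : G.Adj u b) : ∃ A B, S = A ∪ B ∧ Bridge G A B u b ∧ TreeOn G A ∧ TreeOn G B := by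
  obtain ⟨A, B, rfl, hd, huA, hbB, hA, hB, hc⟩ := h.1.split hu hb hub
  have h1 := h.2
  rw [degSum_union hd huA hc, Finset.card_union_of_disjoint hd] at h1
  have h2 := degIn_pos hbB hub
  have h3 := hA.le_degSum
  have h4 := hB.le_degSum
  exact ⟨A, B, rfl, bridge_of_degIn hd huA hbB hc hub (by omega), ⟨hA, by omega⟩, hB, by omega⟩

lemma UniOn.split {S : Finset V} {u b : V} (h : UniOn G S) (hu : u ∈ S) (hb : b ∈ S)
    (hub : G.Adj u b) : ∃ A B, S = A ∪ B ∧
      (Bridge G A B u b ∧ (TreeOn G A ∧ UniOn G B ∨ UniOn G A ∧ TreeOn G B) ∨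
      (TreeOn G A ∧ TreeOn G B ∧ Disjoint A B ∧ u ∈ A ∧ b ∈ B ∧ ∃ c ∈ B, c ≠ b ∧
        ∀ a ∈ A, ∀ v ∈ B, G.Adj a v ↔ a = u ∧ (v = b ∨ v = c))) := by
  obtain ⟨A, B, rfl, hd, huA, hbB, hA, hB, hc⟩ := h.1.split hu hb hub
  have h1 := h.2
  rw [degSum_union hd huA hc, Finset.card_union_of_disjoint hd] at h1
  have h2 := degIn_pos hbB hub
  have h3 := hA.le_degSum
  have h4 := hB.le_degSum
  refine ⟨A, B, rfl, ?_⟩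
  have hpar : ∀ {T : Finset V}, Conn G T → Even (degSum G T) := by
    intro T hT
    induction T using Finset.strongInduction with
    | H T ih =>
      obtain ⟨u, hu⟩ := hT.1
      by_cases hS : T = {u}
      · subst hS; simp [degSum_singleton]
      · obtain ⟨b, hb, hub⟩ := hT.exists_adj hu hS
        obtain ⟨A, B, rfl, hd, huA, hbB, hA, hB, hc⟩ := hT.split hu hb hub
        have huB : u ∉ B := Finset.disjoint_left.1 hd huA
        have hbA : b ∉ A := Finset.disjoint_right.1 hd hbB
        have h1 := ih A (Finset.ssubset_iff_subset_ne.2 ⟨Finset.subset_union_left, fun e =>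
          hbA (e ▸ Finset.mem_union_right _ hbB)⟩) hA
        have h2 := ih B (Finset.ssubset_iff_subset_ne.2 ⟨Finset.subset_union_right, fun e =>
          huB (e ▸ Finset.mem_union_left _ huA)⟩) hB
        rw [degSum_union hd huA hc]
        exact (h1.add h2).add (even_two_mul _)
  obtain ⟨p, hp⟩ := hpar hA
  obtain ⟨q, hq⟩ := hpar hB
  rcases (by omega : degIn G B u = 1 ∨ degIn G B u = 2) with h5 | h5
  · refine Or.inl ⟨bridge_of_degIn hd huA hbB hc hub h5, ?_⟩
    rcases (by omega : degSum G A + 2 = 2 * A.card ∨ degSum G A = 2 * A.card) with h6 | h6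
    · exact Or.inl ⟨⟨hA, h6⟩, hB, by omega⟩
    · exact Or.inr ⟨⟨hA, h6⟩, hB, by omega⟩
  · refine Or.inr ⟨⟨hA, by omega⟩, ⟨hB, by omega⟩, hd, huA, hbB, ?_⟩
    have hbF : b ∈ B.filter (G.Adj u) := Finset.mem_filter.2 ⟨hbB, hub⟩
    have h6 : ((B.filter (G.Adj u)).erase b).card = 1 := by
      rw [Finset.card_erase_of_mem hbF]
      change degIn G B u - 1 = 1
      omega
    obtain ⟨c, hcc⟩ := Finset.card_eq_one.1 h6
    have key : ∀ v, v ∈ B ∧ G.Adj u v ↔ v = b ∨ v = c := by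
      intro v
      rw [← Finset.mem_filter (p := G.Adj u), ← Finset.insert_erase hbF, hcc]
      simp
    have hcE : c ∈ (B.filter (G.Adj u)).erase b := hcc ▸ Finset.mem_singleton_self c
    have hcB := (Finset.mem_filter.1 (Finset.mem_of_mem_erase hcE)).1
    refine ⟨c, hcB, Finset.ne_of_mem_erase hcE, fun a ha v hv => ⟨fun hav => ?_, ?_⟩⟩
    · obtain rfl := hc a ha v hv hav
      exact ⟨rfl, (key v).1 ⟨hv, hav⟩⟩
    · rintro ⟨rfl, h7⟩
      exact ((key v).2 h7).2

lemma Connected.conn {V : Type*} [Fintype V] {G : SimpleGraph V} (h : G.Connected) :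
    Conn G Finset.univ := by
  have := h.nonempty
  refine ⟨Finset.univ_nonempty, fun T _ ⟨a, ha⟩ hcl => ?_⟩
  refine Finset.eq_univ_iff_forall.2 fun b => ?_
  obtain ⟨p⟩ := h.preconnected a b
  induction p with
  | nil => exact ha
  | cons hadj _ ih => exact ih (hcl _ ha _ (Finset.mem_univ _) hadj)

lemma Unicyclic.uniOn {V : Type*} [Fintype V] {G : SimpleGraph V} (h : Unicyclic G) :
    UniOn G Finset.univ := by
  refine ⟨Connected.conn h.1, ?_⟩
  have h1 := G.sum_degrees_eq_twice_card_edges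
  have h2 : G.edgeFinset.card = Fintype.card V := by
    rw [← h.2, ← Set.ncard_coe_finset, SimpleGraph.coe_edgeFinset]
  rw [h2] at h1
  rw [Finset.card_univ, ← h1, degSum]
  refine Finset.sum_congr rfl fun a _ => ?_
  rw [degIn, ← SimpleGraph.card_neighborFinset_eq_degree]
  congr 1
  ext v
  simp

end Connectivity

/-! ### Well-covered trees and unicyclic graphs as rooted trees -/

section Structure

open Classical

set_option linter.unusedSectionVars false

variable {V : Type*} [DecidableEq V] {G : SimpleGraph V}

/-- `G[S]`, rooted at `w`, is represented by a rooted tree. The parameter `u` is `0` if `G[S]` is a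
tree and `1` if it is unicyclic; `e` is `1` if the pendant vertex at `w` is missing and `0`
otherwise. The remaining conditions tie the order of the rooted tree to `S.card`. -/
def RepBy (G : SimpleGraph V) (S : Finset V) (w : V) (e u : ℕ) : Prop :=
  ∃ τ a, TreeRep G S w τ a (a + e) ∧ S.card = 2 * a + e + u ∧ τ.rank + 1 = a + e + u

lemma RepBy.join {A B : Finset V} {w b : V} {e p q : ℕ} (hA : RepBy G A w e p) (hB : RepBy G B b 0 q)
    (h : Bridge G A B w b) : RepBy G (A ∪ B) w e (p + q) := by
  obtain ⟨σ, a, h1, h2, h3⟩ := hA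
  obtain ⟨τ, c, k1, k2, k3⟩ := hB
  refine ⟨.join σ τ, a + c, ?_, ?_, ?_⟩
  · have := h1.join k1 h.1 h.2.1 h.2.2.1 h.2.2.2
    rwa [add_right_comm] at this
  · rw [Finset.card_union_of_disjoint h.1]; omega
  · simp only [RTree.rank]; omega

lemma RepBy.addLeaf {S : Finset V} {w l : V} {p : ℕ} (hS : RepBy G S w 1 p) (h : Bridge G S {l} w l) :
    RepBy G (S ∪ {l}) w 0 p := by
  obtain ⟨σ, a, h1, h2, h3⟩ := hS
  obtain ⟨hd, hw, -, hadj⟩ := h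
  have hl : l ∉ S := Finset.disjoint_singleton_right.1 hd
  have e : S ∪ {l} = insert l S := by ext; simp
  rw [e]
  refine ⟨σ, a + 1, h1.addLeaf hl hw fun v hv => ?_, ?_, ?_⟩
  · rw [G.adj_comm, hadj v hv l (Finset.mem_singleton_self l)]; simp
  · rw [Finset.card_insert_of_notMem hl]; omega
  · omega

lemma WC.bridge_leaf {S : Finset V} {l w : V} {k : ℕ} (h : WC G (S ∪ {l}) k)
    (hb : Bridge G S {l} w l) : Hc G S w ∧ ExtV G (S ∪ {l}) w := by
  have e : S ∪ {l} = insert l S := by ext; simp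
  rw [e] at h ⊢
  refine h.leaf (Finset.disjoint_singleton_right.1 hb.1) hb.2.1 fun v hv => ?_
  rw [G.adj_comm, hb.2.2.2 v hv l (Finset.mem_singleton_self l)]; simp

lemma MaxI.add {S T M D : Finset V} (hM : MaxI G T M) (hT : T ⊆ S) (hDS : D ⊆ S)
    (hD : IsIndepFinset G D) (hTD : ∀ a ∈ T, ∀ d ∈ D, ¬ G.Adj a d)
    (hdom : ∀ v ∈ S, v ∉ T → v ∉ D → ∃ u ∈ M ∪ D, G.Adj u v) : MaxI G S (M ∪ D) := by
  have h1 : MaxI G D D := ⟨subset_rfl, hD, fun v hv hv' => absurd hv hv'⟩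
  refine (hM.union h1 fun a ha => hTD a (hM.1 ha)).extend (Finset.union_subset hT hDS) ?_
  intro v hv hv'
  rw [Finset.mem_union, not_or] at hv'
  exact hdom v hv hv'.1 hv'.2

lemma WC.card_add {S T M D : Finset V} {k : ℕ} (h : WC G S k) (hM : MaxI G T M) (hT : T ⊆ S)
    (hDS : D ⊆ S) (hdis : Disjoint T D)
    (hD : IsIndepFinset G D) (hTD : ∀ a ∈ T, ∀ d ∈ D, ¬ G.Adj a d)
    (hdom : ∀ v ∈ S, v ∉ T → v ∉ D → ∃ u ∈ M ∪ D, G.Adj u v) : M.card + D.card = k := by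
  rw [← Finset.card_union_of_disjoint (hdis.mono_left hM.1)]
  exact h _ (hM.add hT hDS hD hTD hdom)

lemma ExtV.ne_singleton {S : Finset V} {w : V} (h : ExtV G S w) : S ≠ {w} := by
  rintro rfl
  obtain ⟨k, h1, h2⟩ := h
  have e1 := h1 {w} ⟨subset_rfl, isIndepFinset_singleton w, fun v hv hv' => absurd hv hv'⟩
  have e2 := h2 ∅ ⟨Finset.empty_subset _, isIndepFinset_empty, by simp⟩
  rw [Finset.card_singleton] at e1
  rw [Finset.card_empty] at e2
  omega

lemma Bridge.left_ssubset {A B : Finset V} {u b : V} (h : Bridge G A B u b) : A ⊂ A ∪ B :=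
  Finset.ssubset_iff_subset_ne.2 ⟨Finset.subset_union_left, fun e =>
    Finset.disjoint_right.1 h.1 h.2.2.1 (e ▸ Finset.mem_union_right _ h.2.2.1)⟩

lemma Bridge.right_ssubset {A B : Finset V} {u b : V} (h : Bridge G A B u b) : B ⊂ A ∪ B :=
  Finset.ssubset_iff_subset_ne.2 ⟨Finset.subset_union_right, fun e =>
    Finset.disjoint_left.1 h.1 h.2.1 (e ▸ Finset.mem_union_left _ h.2.1)⟩

lemma ExtV.bridge {A B : Finset V} {w b : V} (h : ExtV G (A ∪ B) w) (hbr : Bridge G A B w b)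
    (hB : Conn G B) : (B = {b} ∧ Hc G A w) ∨ (ExtV G A w ∧ ExtV G B b) := by
  by_cases hBb : B = {b}
  · subst hBb
    obtain ⟨k, h1, -⟩ := h
    exact Or.inl ⟨rfl, (h1.bridge_leaf hbr).1⟩
  · obtain ⟨b', hb', hbb'⟩ := hB.exists_adj hbr.2.2.1 hBb
    exact Or.inr (h.split hbr.1 hbr.2.1 hbr.2.2.1 hbr.2.2.2 hb' hbb')

/-- Well-covered trees are built from single vertices by attaching pendant vertices and joining. -/
lemma TreeOn.rep {S : Finset V} (hS : TreeOn G S) {w : V} (hw : w ∈ S) :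
    (ExtV G S w → RepBy G S w 0 0) ∧ (Hc G S w → RepBy G S w 1 0) := by
  induction S using Finset.strongInduction generalizing w with
  | H S ih =>
    constructor
    · intro h
      obtain ⟨b, hb, hwb⟩ := hS.1.exists_adj hw h.ne_singleton
      obtain ⟨A, B, rfl, hbr, hA, hB⟩ := hS.split hw hb hwb
      rcases h.bridge hbr hB.1 with ⟨rfl, h1⟩ | ⟨h1, h2⟩
      · exact ((ih A hbr.left_ssubset hA hbr.2.1).2 h1).addLeaf hbr
      · exact ((ih A hbr.left_ssubset hA hbr.2.1).1 h1).join
          ((ih B hbr.right_ssubset hB hbr.2.2.1).1 h2) hbr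
    · intro h
      by_cases hSw : S = {w}
      · subst hSw
        exact ⟨.leaf, 0, rep_singleton w, by simp, by simp [RTree.rank]⟩
      · obtain ⟨b, hb, hwb⟩ := hS.1.exists_adj hw hSw
        obtain ⟨A, B, rfl, hbr, hA, hB⟩ := hS.split hw hb hwb
        obtain ⟨h1, h2⟩ := h.split_edge hbr.1 hbr.2.1 hbr.2.2.2
        exact ((ih A hbr.left_ssubset hA hbr.2.1).2 h1).join
          ((ih B hbr.right_ssubset hB hbr.2.2.1).1 h2) hbr

lemma exists_leaf_bridge {S : Finset V} {l : V} (hl : l ∈ S) (h : degIn G S l = 1) :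
    ∃ w, Bridge G (S.erase l) {l} w l := by
  obtain ⟨w, hw⟩ := Finset.card_eq_one.1 h
  have key : ∀ v, v ∈ S ∧ G.Adj l v ↔ v = w := by
    intro v
    rw [← Finset.mem_filter (p := G.Adj l), hw, Finset.mem_singleton]
  have hw' := (key w).2 rfl
  refine ⟨w, by simp, Finset.mem_erase.2 ⟨hw'.2.ne', hw'.1⟩, Finset.mem_singleton_self l, ?_⟩
  intro a ha v hv
  rw [Finset.mem_singleton] at hv
  subst hv
  have := key a
  rw [Finset.mem_erase] at ha
  rw [G.adj_comm]
  tauto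

lemma TreeOn.even_card {S : Finset V} {k : ℕ} (hS : TreeOn G S) (h : WC G S k)
    (h2 : 2 ≤ S.card) : Even S.card := by
  have : ∃ l ∈ S, degIn G S l < 2 := by
    by_contra! hcon
    have := Finset.card_nsmul_le_sum S (degIn G S) 2 hcon
    have h3 := hS.2
    rw [smul_eq_mul] at this
    change S.sum (degIn G S) + 2 = _ at h3
    omega
  obtain ⟨l, hl, hdeg⟩ := this
  obtain ⟨b, hb, hlb⟩ := hS.1.exists_adj hl (by rintro rfl; simp at h2)
  have h1 := degIn_pos hb hlb
  obtain ⟨w, hbr⟩ := exists_leaf_bridge (G := G) hl (by omega)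
  have e : S.erase l ∪ {l} = S := by
    rw [Finset.union_comm, ← Finset.insert_eq, Finset.insert_erase hl]
  rw [← e] at h
  have hE := (h.bridge_leaf hbr).2
  rw [e] at hE
  obtain ⟨τ, a, -, h3, -⟩ := (hS.rep (Finset.mem_of_mem_erase hbr.2.1)).1 hE
  exact ⟨a, by omega⟩

/-- If `w` has exactly the neighbours `b` and `c`, then the other neighbours of `b` are adjacent to
those of `c`: otherwise a maximal independent set of `S - {w, b, c}` containing one of each kind
would be maximal in `S - w` while adding `w` makes it maximal in `S`. -/
lemma ExtV.base_adj {B : Finset V} {w b c b' c' : V} (h : ExtV G (insert w B) w) (hwB : w ∉ B)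
    (hw : ∀ v ∈ B, G.Adj w v ↔ v = b ∨ v = c) (hb' : b' ∈ B) (hc' : c' ∈ B)
    (hbb' : G.Adj b b') (hcc' : G.Adj c c') (hb'c : b' ≠ c) (hc'b : c' ≠ b) : G.Adj b' c' := by
  by_contra hcon
  obtain ⟨k, h1, h2⟩ := h
  rw [Finset.erase_insert hwB] at h2
  have hT : ({b', c'} : Finset V) ⊆ (B.erase b).erase c := by
    intro v hv
    simp only [Finset.mem_insert, Finset.mem_singleton] at hv
    simp only [Finset.mem_erase]
    rcases hv with rfl | rfl
    · exact ⟨hb'c, hbb'.ne', hb'⟩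
    · exact ⟨hcc'.ne', hc'b, hc'⟩
  have hind : IsIndepFinset G ({b', c'} : Finset V) :=
    isIndepFinset_insert.2 ⟨isIndepFinset_singleton _, by simpa using hcon⟩
  obtain ⟨M, hMI, hM⟩ := exists_maxI hind hT
  have hb'M : b' ∈ M := hMI (by simp)
  have hc'M : c' ∈ M := hMI (by simp)
  have hTB : (B.erase b).erase c ⊆ B := (Finset.erase_subset _ _).trans (Finset.erase_subset _ _)
  have e1 := h2 M (hM.extend hTB (by
    intro v hv hv'
    simp only [Finset.mem_erase] at hv'
    rcases (by tauto : v = b ∨ v = c) with rfl | rfl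
    · exact ⟨b', hb'M, hbb'.symm⟩
    · exact ⟨c', hc'M, hcc'.symm⟩))
  have e2 := h1.card_add (D := {w}) hM (hTB.trans (Finset.subset_insert _ _)) (by simp)
    (by rw [Finset.disjoint_singleton_right]; exact fun e => hwB (hTB e))
    (isIndepFinset_singleton w) (by
      intro a ha d hd had
      rw [Finset.mem_singleton] at hd
      subst hd
      have := (hw a (hTB ha)).1 had.symm
      simp only [Finset.mem_erase] at ha
      tauto) (by
      intro v hv hv' hvw
      rw [Finset.mem_singleton] at hvw
      have hvB := (Finset.mem_insert.1 hv).resolve_left hvw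
      refine ⟨w, by simp, (hw v hvB).2 ?_⟩
      simp only [Finset.mem_erase] at hv'
      tauto)
  rw [Finset.card_singleton] at e2
  omega

lemma rep_triangle {A : Finset V} {c₁ c₂ c₃ : V} {k : ℕ} (hA : TreeOn G A)
    (h : WC G (insert c₁ (insert c₂ A)) k)
    (h₃ : c₃ ∈ A) (h₂ : c₂ ∉ A) (h₁ : c₁ ∉ A) (h₁₂ : G.Adj c₁ c₂)
    (hadj₂ : ∀ v ∈ A, G.Adj c₂ v ↔ v = c₃) (hadj₁ : ∀ v ∈ A, G.Adj c₁ v ↔ v = c₃) :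
    RepBy G (insert c₁ (insert c₂ A)) c₁ 0 1 := by
  have hHc : Hc G A c₃ := by
    refine ⟨k - 1, fun M hM => ?_, fun M hM => ?_⟩
    · have := h.card_add (D := {c₂}) hM (by intro v; simp; tauto) (by simp)
        (by simp [h₂]) (isIndepFinset_singleton _) (by
          intro a ha d hd had
          rw [Finset.mem_singleton] at hd
          subst hd
          rw [Finset.mem_erase] at ha
          exact ha.1 ((hadj₂ a ha.2).1 had.symm)) (by
          intro v hv hv' hvD
          refine ⟨c₂, by simp, ?_⟩
          simp only [Finset.mem_insert, Finset.mem_erase, Finset.mem_singleton] at hv hv' hvD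
          rcases hv with rfl | rfl | hv
          · exact h₁₂.symm
          · tauto
          · exact (hadj₂ v hv).2 (by tauto))
      rw [Finset.card_singleton] at this
      omega
    · have := h.card_add (D := {c₃}) hM (by intro v; simp [mem_outside]; tauto) (by simp [h₃])
        (by simp [mem_outside]) (isIndepFinset_singleton _) (by
          intro a ha d hd had
          rw [Finset.mem_singleton] at hd
          subst hd
          exact (mem_outside.1 ha).2.2 had.symm) (by
          intro v hv hv' hvD
          refine ⟨c₃, by simp, ?_⟩
          rw [mem_outside] at hv'
          simp only [Finset.mem_insert, Finset.mem_singleton] at hv hvD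
          rcases hv with rfl | rfl | hv
          · exact ((hadj₁ _ h₃).2 rfl).symm
          · exact ((hadj₂ _ h₃).2 rfl).symm
          · tauto)
      rw [Finset.card_singleton] at this
      omega
  obtain ⟨τ, a, h1, h2, h3⟩ := (hA.rep h₃).2 hHc
  refine ⟨_, a + 1, h1.triangle h₃ h₂ h₁ h₁₂ hadj₂ hadj₁, ?_, ?_⟩
  · rw [Finset.card_insert_of_notMem (by simp [h₁, h₁₂.ne]), Finset.card_insert_of_notMem h₂]
    omega
  · simp only [RTree.rank]; omega

lemma rep_pentagon {A : Finset V} {c₁ c₂ c₃ c₄ c₅ : V} {k : ℕ} (hA : TreeOn G A)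
    (h : WC G (insert c₁ (insert c₂ A ∪ insert c₅ {c₄})) k)
    (h₃ : c₃ ∈ A) (h₁ : c₁ ∉ A) (h₂ : c₂ ∉ A) (h₄ : c₄ ∉ A)
    (h₅ : c₅ ∉ A) (h₁₂ : G.Adj c₁ c₂) (h₄₅ : G.Adj c₄ c₅) (h₅₁ : G.Adj c₅ c₁)
    (h₁₄ : c₁ ≠ c₄) (n₁₄ : ¬ G.Adj c₁ c₄) (h₂₄ : c₂ ≠ c₄) (n₂₄ : ¬ G.Adj c₂ c₄)
    (h₂₅ : c₂ ≠ c₅) (n₂₅ : ¬ G.Adj c₂ c₅)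
    (hadj₁ : ∀ v ∈ A, ¬ G.Adj c₁ v) (hadj₂ : ∀ v ∈ A, G.Adj c₂ v ↔ v = c₃)
    (hadj₄ : ∀ v ∈ A, G.Adj c₄ v ↔ v = c₃) (hadj₅ : ∀ v ∈ A, ¬ G.Adj c₅ v) :
    RepBy G (insert c₁ (insert c₂ A ∪ insert c₅ {c₄})) c₁ 0 1 := by
  have hHc : Hc G A c₃ := by
    refine ⟨k - 2, fun M hM => ?_, fun M hM => ?_⟩
    · have := h.card_add (D := {c₂, c₅}) hM (by intro v; simp; tauto)
        (by intro v; simp; tauto)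
        (by simp [h₂, h₅]) (isIndepFinset_insert.2 ⟨isIndepFinset_singleton _, by simpa⟩) (by
          intro a ha d hd had
          simp only [Finset.mem_insert, Finset.mem_singleton] at hd
          rw [Finset.mem_erase] at ha
          rcases hd with rfl | rfl
          · exact ha.1 ((hadj₂ a ha.2).1 had.symm)
          · exact hadj₅ a ha.2 had.symm) (by
          intro v hv hv' hvD
          simp only [Finset.mem_insert, Finset.mem_erase, Finset.mem_singleton,
            Finset.mem_union] at hv hv' hvD
          rcases hv with rfl | (rfl | hv) | rfl | rfl
          · exact ⟨c₂, by simp, h₁₂.symm⟩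
          · tauto
          · exact ⟨c₂, by simp, (hadj₂ v hv).2 (by tauto)⟩
          · tauto
          · exact ⟨c₅, by simp, h₄₅.symm⟩)
      rw [Finset.card_pair h₂₅] at this
      omega
    · have h31 : c₃ ≠ c₁ := fun e => h₁ (e ▸ h₃)
      have := h.card_add (D := {c₃, c₁}) hM (by intro v; simp [mem_outside]; tauto)
        (by intro v; simp; rintro (rfl | rfl) <;> tauto)
        (by simp [mem_outside, h₁])
        (isIndepFinset_insert.2 ⟨isIndepFinset_singleton _, by
          simpa using fun e => hadj₁ c₃ h₃ (G.adj_symm e)⟩) (by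
          intro a ha d hd had
          simp only [Finset.mem_insert, Finset.mem_singleton] at hd
          rw [mem_outside] at ha
          rcases hd with rfl | rfl
          · exact ha.2.2 had.symm
          · exact hadj₁ a ha.1 had.symm) (by
          intro v hv hv' hvD
          rw [mem_outside] at hv'
          simp only [Finset.mem_insert, Finset.mem_singleton, Finset.mem_union] at hv hvD
          rcases hv with rfl | (rfl | hv) | rfl | rfl
          · tauto
          · exact ⟨c₁, by simp, h₁₂⟩
          · exact ⟨c₃, by simp, by tauto⟩
          · exact ⟨c₁, by simp, h₅₁.symm⟩
          · exact ⟨c₃, by simp, ((hadj₄ c₃ h₃).2 rfl).symm⟩)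
      rw [Finset.card_pair h31] at this
      omega
  obtain ⟨τ, a, h1, h2, h3⟩ := (hA.rep h₃).2 hHc
  refine ⟨_, a + 2, h1.pentagon h₃ h₁ h₂ h₄ h₅ h₁₂ h₄₅ h₅₁ h₁₄ n₁₄ h₂₄ n₂₄ h₂₅ n₂₅ hadj₁ hadj₂
    hadj₄ hadj₅, ?_, ?_⟩
  · rw [Finset.card_insert_of_notMem (by simp [h₁, h₁₂.ne, h₅₁.ne', h₁₄]),
      Finset.card_union_of_disjoint (by simp [h₂₄.symm, h₂₅.symm, h₄, h₅]),
      Finset.card_insert_of_notMem h₂, Finset.card_pair h₄₅.ne']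
    omega
  · simp only [RTree.rank]; omega

end Structure

section Unicyclic

open Classical

set_option linter.unusedSectionVars false

variable {V : Type*} [DecidableEq V] {G : SimpleGraph V}

/-- A vertex `b` of a tree lies on no 4-cycle `b b' c' b''`. -/
lemma TreeOn.unique_nbr {B : Finset V} {b b' b'' c' : V} (hB : TreeOn G B) (hb : b ∈ B)
    (hb' : b' ∈ B) (hb'' : b'' ∈ B) (hc' : c' ∈ B) (h1 : G.Adj b b') (h2 : G.Adj b b'')
    (h3 : G.Adj b' c') (h4 : G.Adj b'' c') (hc'b : c' ≠ b) : b'' = b' := by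
  by_contra hne
  obtain ⟨A, C, rfl, hbr, -, -⟩ := hB.split hb hb' h1
  have hc'C : c' ∈ C := by
    refine (Finset.mem_union.1 hc').resolve_left fun hA => hc'b ?_
    exact ((hbr.2.2.2 c' hA b' hbr.2.2.1).1 h3.symm).1
  have hb''A : b'' ∈ A := by
    refine (Finset.mem_union.1 hb'').resolve_right fun hC => hne ?_
    exact ((hbr.2.2.2 b hbr.2.1 b'' hC).1 h2).2
  exact h2.ne ((hbr.2.2.2 b'' hb''A c' hc'C).1 h4).1.symm

lemma rep_base_triangle {B : Finset V} {w b c : V} (hB : TreeOn G B) (hwB : w ∉ B) (hb : b ∈ B)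
    (hc : c ∈ B) (hw : ∀ v ∈ B, G.Adj w v ↔ v = b ∨ v = c)
    (h : ExtV G (insert w B) w) (hbc : G.Adj b c) : RepBy G (insert w B) w 0 1 := by
  obtain ⟨A, C, rfl, hbr, hA, hC⟩ := hB.split hb hc hbc
  have hWC := h
  obtain ⟨k, hk, -⟩ := hWC
  have hd := Finset.disjoint_left.1 hbr.1
  have triv : A = {b} ∨ C = {c} := by
    by_contra! hcon
    obtain ⟨b', hb', hbb'⟩ := hA.1.exists_adj hbr.2.1 hcon.1
    obtain ⟨c', hc', hcc'⟩ := hC.1.exists_adj hbr.2.2.1 hcon.2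
    have := h.base_adj hwB hw (Finset.mem_union_left _ hb') (Finset.mem_union_right _ hc') hbb' hcc'
      (by rintro rfl; exact hd hb' hbr.2.2.1) (by rintro rfl; exact hd hbr.2.1 hc')
    exact hbb'.ne ((hbr.2.2.2 b' hb' c' hc').1 this).1.symm
  simp only [Finset.mem_union, not_or] at hwB
  rcases triv with rfl | rfl
  · have e : insert w ({b} ∪ C) = insert w (insert b C) := by rw [Finset.insert_eq b]
    rw [e] at hk ⊢
    refine rep_triangle (c₃ := c) hC hk hbr.2.2.1 (hd hbr.2.1) hwB.2 ((hw b hb).2 (Or.inl rfl)) ?_ ?_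
    · intro v hv
      rw [hbr.2.2.2 b hbr.2.1 v hv]; simp
    · intro v hv
      rw [hw v (Finset.mem_union_right _ hv)]
      refine or_iff_right ?_
      rintro rfl
      exact hd hbr.2.1 hv
  · have e : insert w (A ∪ {c}) = insert w (insert c A) := by
      rw [Finset.union_comm, Finset.insert_eq c]
    rw [e] at hk ⊢
    refine rep_triangle (c₃ := b) hA hk hbr.2.1 (fun e => hd e hbr.2.2.1) hwB.1
      ((hw c hc).2 (Or.inr rfl)) ?_ ?_
    · intro v hv
      rw [G.adj_comm, hbr.2.2.2 v hv c hbr.2.2.1]; simp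
    · intro v hv
      rw [hw v (Finset.mem_union_left _ hv)]
      refine or_iff_left ?_
      rintro rfl
      exact hd hv hbr.2.2.1

lemma mem_erase_erase_union {A C : Finset V} {b b' c c' : V} (hd : Disjoint A C) (hb : b ∈ A)
    (hb' : b' ∈ A) (hc : c ∈ C) (hc' : c' ∈ C) (v : V) :
    v ∈ ((A.erase b).erase b') ∪ ((C.erase c).erase c') ↔
      v ∈ A ∪ C ∧ v ≠ b ∧ v ≠ b' ∧ v ≠ c ∧ v ≠ c' := by
  rw [Finset.disjoint_left] at hd
  have h1 : v = b → v ∉ C := by rintro rfl; exact hd hb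
  have h2 : v = b' → v ∉ C := by rintro rfl; exact hd hb'
  have h3 : v = c → v ∉ A := by rintro rfl; exact fun e => hd e hc
  have h4 : v = c' → v ∉ A := by rintro rfl; exact fun e => hd e hc'
  simp only [Finset.mem_union, Finset.mem_erase]
  clear hb hb' hc hc' hd
  tauto

set_option maxHeartbeats 1000000 in
lemma rep_base_pentagon {B : Finset V} {w b c : V} (hB : TreeOn G B) (hwB : w ∉ B) (hb : b ∈ B)
    (hc : c ∈ B) (hcb : c ≠ b) (hw : ∀ v ∈ B, G.Adj w v ↔ v = b ∨ v = c)
    (h : ExtV G (insert w B) w) (hbc : ¬ G.Adj b c) : RepBy G (insert w B) w 0 1 := by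
  have hWC := h
  obtain ⟨k, hk, -⟩ := hWC
  obtain ⟨b', hb', hbb'⟩ := hB.1.exists_adj hb (by rintro rfl; simp at hc; exact hcb hc)
  obtain ⟨c', hc', hcc'⟩ := hB.1.exists_adj hc (by rintro rfl; simp at hb; exact hcb hb.symm)
  have key : ∀ p q, p ∈ B → q ∈ B → G.Adj b p → G.Adj c q → G.Adj p q := fun p q hp hq hbp hcq =>
    h.base_adj hwB hw hp hq hbp hcq (by rintro rfl; exact hbc hbp)
      (by rintro rfl; exact hbc hcq.symm)
  have hb'c : b' ≠ c := by rintro rfl; exact hbc hbb'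
  have hc'b : c' ≠ b := by rintro rfl; exact hbc hcc'.symm
  have hbc' := key b' c' hb' hc' hbb' hcc'
  have ub : ∀ v ∈ B, G.Adj b v → v = b' := fun v hv hbv =>
    hB.unique_nbr hb hb' hv hc' hbb' hbv hbc' (key v c' hv hc' hbv hcc') hc'b
  have uc : ∀ v ∈ B, G.Adj c v → v = c' := fun v hv hcv =>
    hB.unique_nbr hc hc' hv hb' hcc' hcv hbc'.symm (key b' v hb' hv hbb' hcv).symm hb'c
  have hwb := (hw b hb).2 (Or.inl rfl)
  have hwc := (hw c hc).2 (Or.inr rfl)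
  have nwb' : ¬ G.Adj w b' := fun e => by
    rcases (hw b' hb').1 e with e | e
    · exact hbb'.ne e.symm
    · exact hb'c e
  have nwc' : ¬ G.Adj w c' := fun e => by
    rcases (hw c' hc').1 e with e | e
    · exact hc'b e
    · exact hcc'.ne e.symm
  have nbc' : ¬ G.Adj b c' := fun e => hbc'.ne (ub c' hc' e).symm
  have ncb' : ¬ G.Adj c b' := fun e => hbc'.ne (uc b' hb' e)
  obtain ⟨A, C, rfl, hbr, hA, hC⟩ := hB.split hb' hc' hbc'
  have hd := Finset.disjoint_left.1 hbr.1
  have hbA : b ∈ A := by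
    refine (Finset.mem_union.1 hb).resolve_right fun e => hc'b ?_
    exact ((hbr.2.2.2 b' hbr.2.1 b e).1 hbb'.symm).2.symm
  have hcC : c ∈ C := by
    refine (Finset.mem_union.1 hc).resolve_left fun e => hb'c ?_
    exact ((hbr.2.2.2 c e c' hbr.2.2.1).1 hcc').1.symm
  have hbrA : Bridge G (A.erase b) {b} b' b := by
    refine ⟨by simp, Finset.mem_erase.2 ⟨hbb'.ne', hbr.2.1⟩, by simp, fun a ha v hv => ?_⟩
    rw [Finset.mem_singleton] at hv
    subst hv
    refine ⟨fun e => ⟨?_, rfl⟩, ?_⟩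
    · exact ub a (Finset.mem_union_left _ (Finset.mem_of_mem_erase ha)) e.symm
    · rintro ⟨rfl, -⟩; exact hbb'.symm
  have hbrC : Bridge G (C.erase c) {c} c' c := by
    refine ⟨by simp, Finset.mem_erase.2 ⟨hcc'.ne', hbr.2.2.1⟩, by simp, fun a ha v hv => ?_⟩
    rw [Finset.mem_singleton] at hv
    subst hv
    refine ⟨fun e => ⟨?_, rfl⟩, ?_⟩
    · exact uc a (Finset.mem_union_right _ (Finset.mem_of_mem_erase ha)) e.symm
    · rintro ⟨rfl, -⟩; exact hcc'.symm
  have eA : A.erase b ∪ {b} = A := by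
    rw [Finset.union_comm, ← Finset.insert_eq, Finset.insert_erase hbA]
  have eC : C.erase c ∪ {c} = C := by
    rw [Finset.union_comm, ← Finset.insert_eq, Finset.insert_erase hcC]
  have tA : TreeOn G (A.erase b) := hbrA.tree_left (eA.symm ▸ hA) (treeOn_singleton b)
  have tC : TreeOn G (C.erase c) := hbrC.tree_left (eC.symm ▸ hC) (treeOn_singleton c)
  have hb'A : b' ∈ A.erase b := hbrA.2.1
  have hc'C : c' ∈ C.erase c := hbrC.2.1
  have triv : A.erase b = {b'} ∨ C.erase c = {c'} := by
    by_contra! hcon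
    obtain ⟨p, hp, hbp⟩ := tA.1.exists_adj hb'A hcon.1
    obtain ⟨q, hq, hcq⟩ := tC.1.exists_adj hc'C hcon.2
    rw [Finset.mem_erase] at hp hq
    -- a maximal independent set containing `p`, `q` extends both by `{w}` and by `{b, c}`
    let T := ((A.erase b).erase b') ∪ ((C.erase c).erase c')
    have memT : ∀ v, v ∈ T ↔ v ∈ A ∪ C ∧ v ≠ b ∧ v ≠ b' ∧ v ≠ c ∧ v ≠ c' :=
      mem_erase_erase_union hbr.1 hbA hbr.2.1 hcC hbr.2.2.1
    have hT : T ⊆ A ∪ C := fun v hv => ((memT v).1 hv).1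
    have npq : ¬ G.Adj p q := fun e => hbp.ne ((hbr.2.2.2 p hp.2 q hq.2).1 e).1.symm
    obtain ⟨M, hMI, hM⟩ := exists_maxI (G := G) (I := {p, q}) (S := T)
      (isIndepFinset_insert.2 ⟨isIndepFinset_singleton _, by simpa using npq⟩) (by
        intro v hv
        simp only [Finset.mem_insert, Finset.mem_singleton] at hv
        simp only [T, Finset.mem_union, Finset.mem_erase]
        rcases hv with rfl | rfl
        · exact Or.inl ⟨hbp.ne', hp⟩
        · exact Or.inr ⟨hcq.ne', hq⟩)
    have hpM : p ∈ M := hMI (by simp)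
    have hqM : q ∈ M := hMI (by simp)
    have e1 := hk.card_add (D := {w}) hM (hT.trans (Finset.subset_insert _ _)) (by simp)
      (by rw [Finset.disjoint_singleton_right]; exact fun e => hwB (hT e))
      (isIndepFinset_singleton _) (by
        intro a ha d hd' had
        rw [Finset.mem_singleton] at hd'
        subst hd'
        have h1 := (memT a).1 ha
        have := (hw a h1.1).1 had.symm
        tauto) (by
        intro v hv hv' hvD
        rw [Finset.mem_singleton] at hvD
        have hvB := (Finset.mem_insert.1 hv).resolve_left hvD
        rw [memT] at hv'
        rcases (by tauto : v = b ∨ v = b' ∨ v = c ∨ v = c') with rfl | rfl | rfl | rfl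
        · exact ⟨w, by simp, hwb⟩
        · exact ⟨p, by simp [hpM], hbp.symm⟩
        · exact ⟨w, by simp, hwc⟩
        · exact ⟨q, by simp [hqM], hcq.symm⟩)
    have e2 := hk.card_add (D := {b, c}) hM (hT.trans (Finset.subset_insert _ _))
      (by intro v; simp; rintro (rfl | rfl) <;> tauto)
      (by
        rw [Finset.disjoint_right]
        intro v hv
        simp only [Finset.mem_insert, Finset.mem_singleton] at hv
        rw [memT]
        tauto)
      (isIndepFinset_insert.2 ⟨isIndepFinset_singleton _, by simpa using hbc⟩) (by
        intro a ha d hd' had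
        simp only [Finset.mem_insert, Finset.mem_singleton] at hd'
        have h1 := (memT a).1 ha
        rcases hd' with rfl | rfl
        · exact h1.2.2.1 (ub a h1.1 had.symm)
        · exact h1.2.2.2.2 (uc a h1.1 had.symm)) (by
        intro v hv hv' hvD
        simp only [Finset.mem_insert, Finset.mem_singleton, not_or] at hvD
        rcases Finset.mem_insert.1 hv with rfl | hvB
        · exact ⟨b, by simp, hwb.symm⟩
        rw [memT] at hv'
        rcases (by tauto : v = b' ∨ v = c') with rfl | rfl
        · exact ⟨b, by simp, hbb'⟩
        · exact ⟨c, by simp, hcc'⟩)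
    rw [Finset.card_singleton] at e1
    rw [Finset.card_pair hcb.symm] at e2
    omega
  have hwA : w ∉ A := fun e => hwB (Finset.mem_union_left _ e)
  have hwC : w ∉ C := fun e => hwB (Finset.mem_union_right _ e)
  rcases triv with hA1 | hC1
  · have e : insert w (A ∪ C) = insert w (insert c (C.erase c) ∪ insert b {b'}) := by
      rw [Finset.insert_erase hcC, ← hA1, Finset.insert_erase hbA, Finset.union_comm]
    rw [e] at hk ⊢
    have s : ∀ v ∈ C.erase c, v ∈ A ∪ C := fun v hv =>
      Finset.mem_union_right _ (Finset.mem_of_mem_erase hv)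
    refine rep_pentagon (c₃ := c') tC hk hc'C ?_ (by simp) ?_ ?_ hwc hbb'.symm hwb.symm ?_ nwb'
      hb'c.symm ncb' hcb (fun e => hbc e.symm) ?_ ?_ ?_ ?_
    · exact fun e => hwC (Finset.mem_of_mem_erase e)
    · exact fun e => hd hbr.2.1 (Finset.mem_of_mem_erase e)
    · exact fun e => hd hbA (Finset.mem_of_mem_erase e)
    · rintro rfl; exact hwB hb'
    · intro v hv e
      rcases (hw v (s v hv)).1 e with rfl | rfl
      · exact hd hbA (Finset.mem_of_mem_erase hv)
      · exact Finset.ne_of_mem_erase hv rfl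
    · intro v hv
      exact ⟨uc v (s v hv), by rintro rfl; exact hcc'⟩
    · intro v hv
      rw [hbr.2.2.2 b' hbr.2.1 v (Finset.mem_of_mem_erase hv)]; simp
    · intro v hv e
      obtain rfl := ub v (s v hv) e
      exact hd hbr.2.1 (Finset.mem_of_mem_erase hv)
  · have e : insert w (A ∪ C) = insert w (insert b (A.erase b) ∪ insert c {c'}) := by
      rw [Finset.insert_erase hbA, ← hC1, Finset.insert_erase hcC]
    rw [e] at hk ⊢
    have s : ∀ v ∈ A.erase b, v ∈ A ∪ C := fun v hv =>
      Finset.mem_union_left _ (Finset.mem_of_mem_erase hv)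
    refine rep_pentagon (c₃ := b') tA hk hb'A ?_ (by simp) ?_ ?_ hwb hcc'.symm hwc.symm ?_ nwc'
      hc'b.symm nbc' hcb.symm hbc ?_ ?_ ?_ ?_
    · exact fun e => hwA (Finset.mem_of_mem_erase e)
    · exact fun e => hd (Finset.mem_of_mem_erase e) hbr.2.2.1
    · exact fun e => hd (Finset.mem_of_mem_erase e) hcC
    · rintro rfl; exact hwB hc'
    · intro v hv e
      rcases (hw v (s v hv)).1 e with rfl | rfl
      · exact Finset.ne_of_mem_erase hv rfl
      · exact hd (Finset.mem_of_mem_erase hv) hcC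
    · intro v hv
      exact ⟨ub v (s v hv), by rintro rfl; exact hbb'⟩
    · intro v hv
      rw [G.adj_comm, hbr.2.2.2 v (Finset.mem_of_mem_erase hv) c' hbr.2.2.1]; simp
    · intro v hv e
      obtain rfl := uc v (s v hv) e
      exact hd (Finset.mem_of_mem_erase hv) hbr.2.2.1

/-- Well-covered unicyclic graphs of odd order are built like well-covered trees, starting from a
triangle or a pentagon one vertex of which carries a tree. The second conclusion concerns the graphs
of even order left after the removal of a pendant vertex at `w`. -/
lemma UniOn.rep {S : Finset V} (hS : UniOn G S) {w : V} (hw : w ∈ S) :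
    (ExtV G S w → Odd S.card → RepBy G S w 0 1) ∧ (Hc G S w → Even S.card → RepBy G S w 1 1) := by
  induction S using Finset.strongInduction generalizing w with
  | H S ih =>
    have hSw : S ≠ {w} := by
      rintro rfl
      have := hS.2
      simp [degSum_singleton] at this
    obtain ⟨b, hb, hwb⟩ := hS.1.exists_adj hw hSw
    constructor
    · intro h hodd
      have main : ∀ A B b, S = A ∪ B → Bridge G A B w b →
          (TreeOn G A ∧ UniOn G B ∨ UniOn G A ∧ TreeOn G B) → RepBy G S w 0 1 := by
        rintro A B b rfl hbr hAB
        rw [Finset.card_union_of_disjoint hbr.1] at hodd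
        have hB : Conn G B := hAB.elim (fun e => e.2.1) fun e => e.2.1
        rcases h.bridge hbr hB with ⟨rfl, h1⟩ | ⟨h1, h2⟩
        · rcases hAB with ⟨hA, hU⟩ | ⟨hU, -⟩
          · have := hU.2
            simp [degSum_singleton] at this
          · refine RepBy.addLeaf ((ih A hbr.left_ssubset hU hbr.2.1).2 h1 ?_) hbr
            rw [Finset.card_singleton] at hodd
            rcases Nat.even_or_odd A.card with e | e
            · exact e
            · rw [Nat.odd_iff] at hodd e; omega
        · rcases hAB with ⟨hA, hU⟩ | ⟨hU, hB⟩
          · have r1 := (hA.rep hbr.2.1).1 h1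
            have r2 := (ih B hbr.right_ssubset hU hbr.2.2.1).1 h2 (by
              obtain ⟨τ, a, -, e, -⟩ := r1
              rw [Nat.odd_iff] at hodd ⊢
              omega)
            exact r1.join r2 hbr
          · have r1 := (hB.rep hbr.2.2.1).1 h2
            have r2 := (ih A hbr.left_ssubset hU hbr.2.1).1 h1 (by
              obtain ⟨τ, a, -, e, -⟩ := r1
              rw [Nat.odd_iff] at hodd ⊢
              omega)
            exact r2.join r1 hbr
      obtain ⟨A, B, hAB, ⟨hbr, hc⟩ | ⟨hA, hB, hd, hwA, hbB, c, hcB, hcb, hadj⟩⟩ := hS.split hw hb hwb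
      · exact main A B b hAB hbr hc
      · by_cases hAw : A = {w}
        · subst hAw
          rw [← Finset.insert_eq] at hAB
          subst hAB
          have hwB : w ∉ B := Finset.disjoint_left.1 hd hwA
          have hadj' : ∀ v ∈ B, G.Adj w v ↔ v = b ∨ v = c := by
            intro v hv
            rw [hadj w hwA v hv]; simp
          by_cases hbc : G.Adj b c
          · exact rep_base_triangle hB hwB hbB hcB hadj' h hbc
          · exact rep_base_pentagon hB hwB hbB hcB hcb hadj' h hbc
        · -- a second branch at `w` is attached by a bridge
          obtain ⟨d, hdA, hwd⟩ := hA.1.exists_adj hwA hAw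
          obtain ⟨A₁, A₂, rfl, hbr, hA₁, hA₂⟩ := hA.split hwA hdA hwd
          have e : S = (A₁ ∪ B) ∪ A₂ := by rw [hAB, Finset.union_right_comm]
          rw [Finset.disjoint_union_left] at hd
          have hbr' : Bridge G (A₁ ∪ B) A₂ w d := by
            refine ⟨Finset.disjoint_union_left.2 ⟨hbr.1, hd.2.symm⟩,
              Finset.mem_union_left _ hbr.2.1, hbr.2.2.1, fun a ha v hv => ?_⟩
            rcases Finset.mem_union.1 ha with ha | ha
            · exact hbr.2.2.2 a ha v hv
            · have hvw : v ≠ w := by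
                rintro rfl; exact Finset.disjoint_left.1 hbr.1 hbr.2.1 hv
              have haw : a ≠ w := by
                rintro rfl; exact Finset.disjoint_left.1 hd.1 hbr.2.1 ha
              rw [G.adj_comm, hadj v (Finset.mem_union_right _ hv) a ha]
              tauto
          exact main _ _ d e hbr' (Or.inr ⟨hbr'.uni_left (e ▸ hS) hA₂, hA₂⟩)
    · intro h heven
      obtain ⟨A, B, rfl, ⟨hbr, hc⟩ | ⟨hA, hB, hd, hwA, hbB, c, hcB, hcb, hadj⟩⟩ := hS.split hw hb hwb
      · rw [Finset.card_union_of_disjoint hbr.1, Nat.even_iff] at heven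
        obtain ⟨h1, h2⟩ := h.split_edge hbr.1 hbr.2.1 hbr.2.2.2
        rcases hc with ⟨hA, hU⟩ | ⟨hU, hB⟩
        · have r1 := (hA.rep hbr.2.1).2 h1
          have r2 := (ih B hbr.right_ssubset hU hbr.2.2.1).1 h2 (by
            obtain ⟨τ, a, -, e, -⟩ := r1
            rw [Nat.odd_iff]
            omega)
          exact r1.join r2 hbr
        · have r1 := (hB.rep hbr.2.2.1).1 h2
          have r2 := (ih A hbr.left_ssubset hU hbr.2.1).2 h1 (by
            obtain ⟨τ, a, -, e, -⟩ := r1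
            rw [Nat.even_iff]
            omega)
          exact r2.join r1 hbr
      · exfalso
        obtain ⟨h1, k, h2, -⟩ := h.split hd hwA fun a ha v hv hav => ((hadj a ha v hv).1 hav).1
        obtain ⟨τ, a, -, e, -⟩ := (hA.rep hwA).2 h1
        have h3 := hB.even_card h2 (Finset.one_lt_card.2 ⟨c, hcB, b, hbB, hcb⟩)
        rw [Finset.card_union_of_disjoint hd, Nat.even_iff] at heven
        rw [Nat.even_iff] at h3
        omega

end Unicyclic

/-! ### The graphs without pendant vertices -/

section Cycle

open Classical

set_option linter.unusedSectionVars false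

variable {V : Type*} [Fintype V] {G : SimpleGraph V}

/-- A unicyclic graph without pendant vertices is a cycle; here its vertices are listed cyclically
as `f 0, …, f (n - 1)`. -/
lemma exists_cyclic_labelling {n : ℕ} (hcard : Fintype.card V = n) (hconn : G.Connected)
    (h : ∀ v : V, degIn G Finset.univ v = 2) :
    ∃ f : ℕ → V, (∀ i < n, ∀ j < n, f i = f j → i = j) ∧ (∀ v, ∃ i < n, f i = v) ∧
      ∀ i < n, ∀ j < n, G.Adj (f i) (f j) ↔
        j = i + 1 ∨ i = j + 1 ∨ (i = 0 ∧ j + 1 = n) ∨ (j = 0 ∧ i + 1 = n) := by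
  have hn2 : ∀ v, (G.neighborSet v).ncard = 2 := by
    intro v
    rw [← h v, degIn, ← Set.ncard_coe_finset]
    congr 1
    ext u
    simp
  have hcyc : G.IsCycles := fun v _ => hn2 v
  obtain ⟨v₀⟩ := hconn.nonempty
  obtain ⟨p, hp, hverts⟩ := hcyc.exists_cycle_toSubgraph_verts_eq_connectedComponentSupp
    (v := v₀) (c := G.connectedComponentMk v₀) rfl
    (Set.nonempty_of_ncard_ne_zero (by rw [hn2]; norm_num))
  have hL := hp.three_le_length
  have hinj : ∀ i < p.length, ∀ j < p.length, p.getVert i = p.getVert j → i = j := by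
    intro i hi j hj hij
    exact hp.getVert_injOn' (by simp only [Set.mem_ofPred_eq]; omega)
      (by simp only [Set.mem_ofPred_eq]; omega) hij
  have hend : p.getVert p.length = p.getVert 0 := by simp
  have hsurj : ∀ v, ∃ i < p.length, p.getVert i = v := by
    intro v
    have hv : v ∈ p.toSubgraph.verts := by
      rw [hverts]
      exact ConnectedComponent.sound (hconn.preconnected v v₀)
    rw [Walk.mem_verts_toSubgraph, Walk.mem_support_iff_exists_getVert] at hv
    obtain ⟨i, hi, hil⟩ := hv
    rcases hil.lt_or_eq with hlt | rfl
    · exact ⟨i, hlt, hi⟩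
    · exact ⟨0, by omega, by rw [← hend, hi]⟩
  have hlen : p.length = n := by
    rw [← hcard, ← Fintype.card_fin p.length]
    refine Fintype.card_congr (Equiv.ofBijective (fun i : Fin p.length => p.getVert i) ⟨?_, ?_⟩)
    · intro i j hij
      exact Fin.ext (hinj i i.2 j j.2 hij)
    · intro v
      obtain ⟨i, hi, rfl⟩ := hsurj v
      exact ⟨⟨i, hi⟩, rfl⟩
  have hsucc : ∀ i < p.length, G.Adj (p.getVert i) (p.getVert (i + 1)) := fun i hi =>
    p.adj_getVert_succ hi
  have hlast : G.Adj (p.getVert 0) (p.getVert (p.length - 1)) := by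
    have := hsucc (p.length - 1) (by omega)
    rw [Nat.sub_add_cancel (by omega), hend] at this
    exact this.symm
  -- the two neighbours along the cycle are all neighbours
  have hnb : ∀ i < p.length, ∀ a < p.length, ∀ b < p.length, a ≠ b →
      G.Adj (p.getVert i) (p.getVert a) → G.Adj (p.getVert i) (p.getVert b) →
      ∀ j < p.length, G.Adj (p.getVert i) (p.getVert j) → j = a ∨ j = b := by
    intro i _ a ha b hb hab h1 h2 j hj h3
    have e : ({p.getVert a, p.getVert b} : Set V) = G.neighborSet (p.getVert i) := by
      refine Set.eq_of_subset_of_ncard_le ?_ ?_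
      · rintro v (rfl | rfl)
        · exact h1
        · exact h2
      · rw [hn2, Set.ncard_pair fun e => hab (hinj a ha b hb e)]
    have h4 : p.getVert j ∈ ({p.getVert a, p.getVert b} : Set V) := by rw [e]; exact h3
    rcases h4 with h4 | h4
    · exact Or.inl (hinj j hj a ha h4)
    · exact Or.inr (hinj j hj b hb h4)
  subst hlen
  refine ⟨p.getVert, hinj, hsurj, fun i hi j hj => ⟨fun hij => ?_, ?_⟩⟩
  · rcases Nat.eq_zero_or_pos i with rfl | hi0
    · rcases hnb 0 hi 1 (by omega) (p.length - 1) (by omega) (by omega) (hsucc 0 hi) hlast j hj hij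
        with rfl | rfl <;> omega
    · have hpred : G.Adj (p.getVert i) (p.getVert (i - 1)) := by
        have := hsucc (i - 1) (by omega)
        rw [Nat.sub_add_cancel hi0] at this
        exact this.symm
      by_cases hiL : i + 1 = p.length
      · have h0 : G.Adj (p.getVert i) (p.getVert 0) := by
          have := hsucc i hi
          rwa [hiL, hend] at this
        rcases hnb i hi (i - 1) (by omega) 0 (by omega) (by omega) hpred h0 j hj hij
          with rfl | rfl <;> omega
      · rcases hnb i hi (i - 1) (by omega) (i + 1) (by omega) (by omega) hpred (hsucc i hi) j hj hij
          with rfl | rfl <;> omega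
  · rintro (rfl | rfl | ⟨rfl, e⟩ | ⟨rfl, e⟩)
    · exact hsucc i hi
    · exact (hsucc j hj).symm
    · obtain rfl : j = p.length - 1 := by omega
      exact hlast
    · obtain rfl : i = p.length - 1 := by omega
      exact hlast.symm

lemma cycleGraph_adj_iff {n : ℕ} (hn : 3 ≤ n) (u v : Fin n) : (cycleGraph n).Adj u v ↔
    v.val = u.val + 1 ∨ u.val = v.val + 1 ∨ (u.val = 0 ∧ v.val + 1 = n) ∨
      (v.val = 0 ∧ u.val + 1 = n) := by
  have hu := u.2
  have hv := v.2
  have key : ∀ a b : Fin n, (a - b).val = if b.val ≤ a.val then a.val - b.val else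
      n + a.val - b.val := by
    intro a b
    split_ifs with h
    · exact Fin.sub_val_of_le h
    · exact Fin.coe_sub_iff_lt.2 (not_le.1 h)
  rw [cycleGraph_adj', key, key]
  split_ifs <;> omega

/-- Long cycles are not well-covered: a maximal independent set of `f 4, …, f (n - 2)` that contains
both ends extends by `f 1` as well as by `f 0, f 2`. -/
lemma not_WC_cycle {n k : ℕ} (hn : 9 ≤ n) (f : ℕ → V)
    (hinj : ∀ i < n, ∀ j < n, f i = f j → i = j) (hsurj : ∀ v, ∃ i < n, f i = v)
    (hadj : ∀ i < n, ∀ j < n, G.Adj (f i) (f j) ↔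
        j = i + 1 ∨ i = j + 1 ∨ (i = 0 ∧ j + 1 = n) ∨ (j = 0 ∧ i + 1 = n)) :
    ¬ WC G Finset.univ k := by
  intro h
  let T := (Finset.Icc 4 (n - 2)).image f
  have memT : ∀ i < n, f i ∈ T ↔ 4 ≤ i ∧ i + 2 ≤ n := by
    intro i hi
    simp only [T, Finset.mem_image, Finset.mem_Icc]
    constructor
    · rintro ⟨j, hj, e⟩
      have := hinj j (by omega) i hi e
      omega
    · intro hi'
      exact ⟨i, by omega, rfl⟩
  obtain ⟨M, hMI, hM⟩ := exists_maxI (G := G) (I := {f 4, f (n - 2)}) (S := T)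
    (isIndepFinset_insert.2 ⟨isIndepFinset_singleton _, by
      simp only [Finset.mem_singleton, forall_eq]
      rw [hadj 4 (by omega) (n - 2) (by omega)]
      omega⟩) (by
    intro v hv
    simp only [Finset.mem_insert, Finset.mem_singleton] at hv
    rcases hv with rfl | rfl
    · rw [memT _ (by omega)]; omega
    · rw [memT _ (by omega)]; omega)
  have m4 : f 4 ∈ M := hMI (by simp)
  have m5 : f (n - 2) ∈ M := hMI (by simp)
  have hne : f 0 ≠ f 2 := fun e => by have := hinj 0 (by omega) 2 (by omega) e; omega
  have e1 := h.card_add (D := {f 1}) hM (Finset.subset_univ _) (Finset.subset_univ _)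
    (by rw [Finset.disjoint_singleton_right, memT _ (by omega)]; omega)
    (isIndepFinset_singleton _) (by
      intro a ha d hd
      rw [Finset.mem_singleton] at hd
      subst hd
      obtain ⟨i, hi, rfl⟩ := hsurj a
      rw [memT i hi] at ha
      rw [hadj i hi 1 (by omega)]
      omega) (by
      intro v _ hv hvD
      obtain ⟨i, hi, rfl⟩ := hsurj v
      rw [memT i hi] at hv
      have hi1 : i ≠ 1 := by rintro rfl; simp at hvD
      rcases (by omega : i = 0 ∨ i = 2 ∨ i = 3 ∨ i = n - 1) with rfl | rfl | rfl | rfl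
      · exact ⟨f 1, by simp, (hadj _ (by omega) _ (by omega)).2 (by omega)⟩
      · exact ⟨f 1, by simp, (hadj _ (by omega) _ (by omega)).2 (by omega)⟩
      · exact ⟨f 4, by simp [m4], (hadj _ (by omega) _ (by omega)).2 (by omega)⟩
      · exact ⟨f (n - 2), by simp [m5], (hadj _ (by omega) _ (by omega)).2 (by omega)⟩)
  have e2 := h.card_add (D := {f 0, f 2}) hM (Finset.subset_univ _) (Finset.subset_univ _)
    (by
      rw [Finset.disjoint_right]
      intro v hv
      simp only [Finset.mem_insert, Finset.mem_singleton] at hv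
      rcases hv with rfl | rfl <;> rw [memT _ (by omega)] <;> omega)
    (isIndepFinset_insert.2 ⟨isIndepFinset_singleton _, by
      simp only [Finset.mem_singleton, forall_eq]
      rw [hadj 0 (by omega) 2 (by omega)]
      omega⟩) (by
      intro a ha d hd
      simp only [Finset.mem_insert, Finset.mem_singleton] at hd
      obtain ⟨i, hi, rfl⟩ := hsurj a
      rw [memT i hi] at ha
      rcases hd with rfl | rfl <;> rw [hadj i hi _ (by omega)] <;> omega) (by
      intro v _ hv hvD
      obtain ⟨i, hi, rfl⟩ := hsurj v
      rw [memT i hi] at hv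
      have hi0 : i ≠ 0 := by rintro rfl; simp at hvD
      have hi2 : i ≠ 2 := by rintro rfl; simp at hvD
      rcases (by omega : i = 1 ∨ i = 3 ∨ i = n - 1) with rfl | rfl | rfl
      · exact ⟨f 2, by simp, (hadj _ (by omega) _ (by omega)).2 (by omega)⟩
      · exact ⟨f 2, by simp, (hadj _ (by omega) _ (by omega)).2 (by omega)⟩
      · exact ⟨f 0, by simp, (hadj _ (by omega) _ (by omega)).2 (by omega)⟩)
  rw [Finset.card_singleton] at e1
  rw [Finset.card_pair hne] at e2
  omega

lemma nonempty_iso_cycleGraph {n : ℕ} (hn : 3 ≤ n) (f : ℕ → V)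
    (hinj : ∀ i < n, ∀ j < n, f i = f j → i = j) (hsurj : ∀ v, ∃ i < n, f i = v)
    (hadj : ∀ i < n, ∀ j < n, G.Adj (f i) (f j) ↔
        j = i + 1 ∨ i = j + 1 ∨ (i = 0 ∧ j + 1 = n) ∨ (j = 0 ∧ i + 1 = n)) :
    Nonempty (cycleGraph n ≃g G) := by
  refine ⟨⟨Equiv.ofBijective (fun i : Fin n => f i) ⟨?_, ?_⟩, ?_⟩⟩
  · intro i j hij
    exact Fin.ext (hinj i i.2 j j.2 hij)
  · intro v
    obtain ⟨i, hi, rfl⟩ := hsurj v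
    exact ⟨⟨i, hi⟩, rfl⟩
  · intro i j
    rw [cycleGraph_adj_iff hn]
    exact hadj i i.2 j j.2

/-- Every unicyclic graph either has a pendant vertex or is 2-regular. -/
lemma Unicyclic.leaf_or_regular (h : Unicyclic G) :
    (∃ l, degIn G Finset.univ l = 1) ∨ ∀ v : V, degIn G Finset.univ v = 2 := by
  have hU := h.uniOn
  by_cases hl : ∃ l, degIn G Finset.univ l = 1
  · exact Or.inl hl
  · right
    have hge : ∀ v ∈ Finset.univ, 2 ≤ degIn G Finset.univ v := by
      intro v _
      obtain ⟨b, hb, hvb⟩ := hU.1.exists_adj (Finset.mem_univ v) (by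
        intro e
        have := hU.2
        rw [e] at this
        simp [degSum_singleton] at this)
      have h1 := degIn_pos hb hvb
      have h2 : degIn G Finset.univ v ≠ 1 := fun e => hl ⟨v, e⟩
      omega
    have hsum : ∑ v : V, 2 = ∑ v : V, degIn G Finset.univ v := by
      have : ∑ v : V, degIn G Finset.univ v = 2 * Finset.univ.card := hU.2
      rw [this]
      simp [mul_comm]
    intro v
    exact ((Finset.sum_eq_sum_iff_of_le hge).1 hsum v (Finset.mem_univ v)).symm

end Cycle

lemma indepPoly_congr {V W : Type*} [Fintype V] [Fintype W] {G : SimpleGraph V} {H : SimpleGraph W}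
    (e : H ≃g G) : indepPoly H = indepPoly G := by
  classical
  simp only [indepPoly]
  refine Fintype.sum_equiv (Equiv.finsetCongr e.toEquiv) _ _ fun s => ?_
  have : IsIndepFinset G (s.map e.toEquiv.toEmbedding) ↔ IsIndepFinset H s := by
    simp only [IsIndepFinset, Finset.mem_map, Equiv.coe_toEmbedding, forall_exists_index, and_imp,
      forall_apply_eq_imp_iff₂]
    refine forall₂_congr fun a _ => forall₂_congr fun b _ => not_congr ?_
    exact e.map_adj_iff
  simp only [Equiv.finsetCongr_apply, this, Finset.card_map]

/-! ### The graphs `G(g, k, ℓ)` -/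

section SP

open Classical

/-- The vertices of `Fin N` with index in `[lo, hi)`. -/
noncomputable def seg (N lo hi : ℕ) : Finset (Fin N) :=
  Finset.univ.filter fun v => lo ≤ v.val ∧ v.val < hi

lemma mem_seg {N lo hi : ℕ} {v : Fin N} : v ∈ seg N lo hi ↔ lo ≤ v.val ∧ v.val < hi := by
  simp [seg]

lemma TreeRep.congr {V : Type*} [DecidableEq V] {G : SimpleGraph V} {S S' : Finset V} {r : V}
    {σ τ : RTree} {a a' b b' : ℕ} (h : TreeRep G S r σ a b) (hS : S' = S) (hτ : τ = σ)
    (ha : a' = a) (hb : b' = b) : TreeRep G S' r τ a' b' := by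
  subst hS hτ ha hb; exact h

/-- A copy of `P_{m+1}*` occupying the indices `[b, e)`, rooted at the end `b` of its path. -/
lemma rep_seg {N e lo : ℕ} {G : SimpleGraph (Fin N)} (heN : e ≤ N)
    (hadj : ∀ i j : Fin N, lo ≤ i.val → i.val < j.val → j.val < e →
      (G.Adj i j ↔ (i.val - lo) % 2 = 0 ∧ (j.val = i.val + 1 ∨ j.val = i.val + 2))) :
    ∀ (m b : ℕ) (r : Fin N), r.val = b → lo ≤ b → (b - lo) % 2 = 0 → b + 2 * (m + 1) = e →
      TreeRep G (seg N b e) r (RTree.path m) (m + 1) (m + 1) := by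
  have base : ∀ (r s : Fin N), lo ≤ r.val → (r.val - lo) % 2 = 0 → s.val = r.val + 1 →
      s.val < e → TreeRep G (insert s {r}) r .leaf 1 1 := by
    intro r s h1 h2 h3 h4
    refine (rep_singleton r).addLeaf ?_ (by simp) ?_
    · rw [Finset.mem_singleton, Fin.ext_iff]; omega
    · intro v hv
      rw [Finset.mem_singleton] at hv
      subst hv
      rw [G.adj_comm, hadj v s h1 (by omega) h4]
      simp [h2, h3]
  intro m
  induction m with
  | zero =>
    intro b r hr hlo hb he
    have := base r ⟨b + 1, by omega⟩ (by omega) (by rw [hr]; exact hb) (by simp [hr])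
      (by simp; omega)
    refine this.congr ?_ rfl rfl rfl
    ext v
    simp only [mem_seg, Finset.mem_insert, Finset.mem_singleton, Fin.ext_iff]
    omega
  | succ m ih =>
    intro b r hr hlo hb he
    have h1 := base r ⟨b + 1, by omega⟩ (by omega) (by rw [hr]; exact hb) (by simp [hr])
      (by simp; omega)
    have h2 := ih (b + 2) ⟨b + 2, by omega⟩ rfl (by omega) (by omega) (by omega)
    have h3 := h1.join h2 ?_ (by simp) (by simp only [mem_seg]; omega) ?_
    · refine h3.congr ?_ rfl (by omega) (by omega)
      ext v
      simp only [mem_seg, Finset.mem_union, Finset.mem_insert, Finset.mem_singleton, Fin.ext_iff]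
      omega
    · rw [Finset.disjoint_left]
      intro v hv
      simp only [mem_seg, Finset.mem_insert, Finset.mem_singleton, Fin.ext_iff] at hv ⊢
      omega
    · intro u hu v hv
      simp only [mem_seg, Finset.mem_insert, Finset.mem_singleton, Fin.ext_iff] at hu hv
      rw [hadj u v (by omega) (by omega) (by omega)]
      simp only [Fin.ext_iff]
      omega

section Adjacency

variable {g k l : ℕ} {i j : Fin (g + 2 * k + 2 * l)}

lemma SPgraph_adj_cycle (h1 : i.val < j.val) (h2 : j.val < g) :
    (SPgraph g k l).Adj i j ↔ j.val = i.val + 1 ∨ (i.val = 0 ∧ j.val = g - 1) := by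
  simp only [SPgraph, fromRel_adj, ne_eq, Fin.ext_iff]
  grind

lemma SPgraph_adj_cross (hg : 3 ≤ g) (h1 : i.val < g) (h2 : g ≤ j.val) :
    (SPgraph g k l).Adj i j ↔
      (i.val = 0 ∧ 0 < k ∧ j.val = g) ∨ (i.val = 2 ∧ 0 < l ∧ j.val = g + 2 * k) := by
  simp only [SPgraph, fromRel_adj, ne_eq, Fin.ext_iff]
  grind

lemma SPgraph_adj_fst (hg : 3 ≤ g) (h1 : g ≤ i.val) (h2 : i.val < j.val) (h3 : j.val < g + 2 * k) :
    (SPgraph g k l).Adj i j ↔ (i.val - g) % 2 = 0 ∧ (j.val = i.val + 1 ∨ j.val = i.val + 2) := by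
  simp only [SPgraph, fromRel_adj, ne_eq, Fin.ext_iff]
  grind

lemma SPgraph_adj_snd (hg : 3 ≤ g) (h1 : g + 2 * k ≤ i.val) (h2 : i.val < j.val) :
    (SPgraph g k l).Adj i j ↔
      (i.val - (g + 2 * k)) % 2 = 0 ∧ (j.val = i.val + 1 ∨ j.val = i.val + 2) := by
  simp only [SPgraph, fromRel_adj, ne_eq, Fin.ext_iff]
  grind

lemma SPgraph_adj_mid (hg : 3 ≤ g) (h1 : g ≤ i.val) (h2 : i.val < g + 2 * k)
    (h3 : g + 2 * k ≤ j.val) : ¬ (SPgraph g k l).Adj i j := by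
  simp only [SPgraph, fromRel_adj, ne_eq, Fin.ext_iff]
  grind

end Adjacency

/-- The cycle vertex `2` together with the copy of `P_ℓ*` attached to it. -/
lemma SPgraph_rep_two {g k l : ℕ} (hg : 3 ≤ g) (c : Fin (g + 2 * k + 2 * l)) (hc : c.val = 2) :
    TreeRep (SPgraph g k l) ({c} ∪ seg _ (g + 2 * k) (g + 2 * k + 2 * l)) c (RTree.path l)
      l (l + 1) := by
  rcases l with _ | l
  · have e : seg (g + 2 * k + 2 * 0) (g + 2 * k) (g + 2 * k + 2 * 0) = ∅ := by
      ext v; simp only [mem_seg, Finset.notMem_empty, iff_false]; omega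
    rw [e, Finset.union_empty]
    exact rep_singleton c
  · have h := rep_seg (N := g + 2 * k + 2 * (l + 1)) (e := g + 2 * k + 2 * (l + 1))
      (lo := g + 2 * k) (G := SPgraph g k (l + 1)) le_rfl
      (fun i j h1 h2 _ => SPgraph_adj_snd hg h1 h2) l (g + 2 * k) ⟨g + 2 * k, by omega⟩ rfl le_rfl
      (by simp) rfl
    have h' := (rep_singleton (G := SPgraph g k (l + 1)) c).join h ?_ (by simp)
      (by simp only [mem_seg]; omega) ?_
    · exact h'.congr rfl rfl (by omega) (by omega)
    · rw [Finset.disjoint_singleton_left, mem_seg]; omega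
    · intro u hu v hv
      rw [Finset.mem_singleton] at hu
      subst hu
      rw [mem_seg] at hv
      rw [SPgraph_adj_cross hg (by omega) (by omega)]
      simp only [Fin.ext_iff, true_and]
      omega

/-- The cycle and the copy of `P_ℓ*`, rooted at the cycle vertex `0`. -/
lemma SPgraph_rep_zero {g k l : ℕ} (hg : g = 3 ∨ g = 5) (c : Fin (g + 2 * k + 2 * l))
    (hc : c.val = 0) :
    TreeRep (SPgraph g k l) (seg _ 0 g ∪ seg _ (g + 2 * k) (g + 2 * k + 2 * l)) c
      (RTree.path (l + g / 2)) (l + g / 2) (l + g / 2) := by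
  have hg3 : 3 ≤ g := by omega
  have h := SPgraph_rep_two (k := k) (l := l) hg3 ⟨2, by omega⟩ rfl
  have hmem : ∀ v : Fin (g + 2 * k + 2 * l),
      v ∈ ({⟨2, by omega⟩} ∪ seg _ (g + 2 * k) (g + 2 * k + 2 * l) : Finset _) ↔
        v.val = 2 ∨ g + 2 * k ≤ v.val := by
    intro v
    simp only [Finset.mem_union, Finset.mem_singleton, mem_seg, Fin.ext_iff]
    omega
  -- Adjacency of a cycle vertex with the part hanging from vertex `2`.
  have hadj : ∀ u v : Fin (g + 2 * k + 2 * l), u.val < g → u.val ≠ 2 →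
      v ∈ ({⟨2, by omega⟩} ∪ seg _ (g + 2 * k) (g + 2 * k + 2 * l) : Finset _) →
      ((SPgraph g k l).Adj u v ↔ v.val = 2 ∧ (u.val = 1 ∨ u.val = 3 ∨ (u.val = 0 ∧ g = 3))) := by
    intro u v hu hu2 hv
    rw [hmem] at hv
    rcases hv with hv | hv
    · rcases lt_or_gt_of_ne hu2 with h1 | h1
      · rw [SPgraph_adj_cycle (by omega) (by omega)]; omega
      · rw [SimpleGraph.adj_comm, SPgraph_adj_cycle (by omega) (by omega)]; omega
    · rw [SPgraph_adj_cross hg3 hu (by omega)]; omega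
  rcases hg with rfl | rfl
  · have h' := h.triangle (c₁ := c) (c₂ := ⟨1, by omega⟩) (by rw [hmem]; simp)
      (by rw [hmem]; simp; omega) (by rw [hmem]; omega)
      ((SPgraph_adj_cycle (by simp [hc]) (by simp)).2 (by simp [hc]))
      (fun v hv => by
        rw [hadj _ v (by simp) (by simp) hv]; simp [Fin.ext_iff])
      (fun v hv => by
        rw [hadj _ v (by omega) (by omega) hv]; simp [Fin.ext_iff, hc])
    refine h'.congr ?_ rfl (by omega) (by omega)
    ext v
    simp only [Finset.mem_insert, Finset.mem_union, Finset.mem_singleton, mem_seg, Fin.ext_iff]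
    omega
  · have h' := h.pentagon (c₁ := c) (c₂ := ⟨1, by omega⟩) (c₄ := ⟨3, by omega⟩)
      (c₅ := ⟨4, by omega⟩) (by rw [hmem]; simp)
      (by rw [hmem]; omega) (by rw [hmem]; simp; omega) (by rw [hmem]; simp; omega)
      (by rw [hmem]; simp; omega)
      ((SPgraph_adj_cycle (by simp [hc]) (by simp)).2 (by simp [hc]))
      ((SPgraph_adj_cycle (by simp) (by simp)).2 (by simp))
      (((SPgraph_adj_cycle (by simp [hc]) (by simp)).2 (by simp [hc])).symm)
      (by simp [Fin.ext_iff, hc])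
      (by rw [SPgraph_adj_cycle (by simp [hc]) (by simp)]; simp [hc])
      (by simp)
      (by rw [SPgraph_adj_cycle (by simp) (by simp)]; simp)
      (by simp)
      (by rw [SPgraph_adj_cycle (by simp) (by simp)]; simp)
      (fun v hv => by rw [hadj _ v (by omega) (by omega) hv]; simp [hc])
      (fun v hv => by rw [hadj _ v (by simp) (by simp) hv]; simp [Fin.ext_iff])
      (fun v hv => by rw [hadj _ v (by simp) (by simp) hv]; simp [Fin.ext_iff])
      (fun v hv => by rw [hadj _ v (by simp) (by simp) hv]; simp)
    refine h'.congr ?_ rfl (by omega) (by omega)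
    ext v
    simp only [Finset.mem_insert, Finset.mem_union, Finset.mem_singleton, mem_seg, Fin.ext_iff]
    omega

/-- All graphs of order `2a + 1` in `S_P` have the same independence polynomial: up to the
substitution `x ↦ x / (1 + x)` it is that of the path on `a + 1` vertices. -/
lemma eval_SPgraph {g k l a : ℕ} (hg : g = 3 ∨ g = 5) (ha : g + 2 * k + 2 * l = 2 * a + 1) {x : ℝ}
    (hx : -1 < x) : (indepPoly (SPgraph g k l)).eval x =
      (1 + x) ^ a * RTree.pathPoly (a + 1) (x / (1 + x)) := by
  have hg3 : 3 ≤ g := by omega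
  rw [eval_indepPoly]
  have h := SPgraph_rep_zero (k := k) (l := l) hg ⟨0, by omega⟩ rfl
  rcases k with _ | k
  · have e : seg (g + 2 * 0 + 2 * l) 0 g ∪ seg _ (g + 2 * 0) (g + 2 * 0 + 2 * l) = Finset.univ := by
      ext v
      simp only [Finset.mem_union, mem_seg, Finset.mem_univ, iff_true]
      omega
    rw [e] at h
    have ea : l + g / 2 = a := by omega
    rw [h.total (Finset.mem_univ _) hx, RTree.val_path, ea]
  · have h2 := rep_seg (N := g + 2 * (k + 1) + 2 * l) (e := g + 2 * (k + 1))
      (lo := g) (G := SPgraph g (k + 1) l) (by omega)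
      (fun i j h1 h2 h3 => SPgraph_adj_fst hg3 h1 h2 h3) k g ⟨g, by omega⟩ rfl le_rfl
      (by simp) rfl
    have h3 := h.join h2 ?_ (by simp only [Finset.mem_union, mem_seg]; omega)
      (by simp only [mem_seg]; omega) ?_
    · have e : (seg (g + 2 * (k + 1) + 2 * l) 0 g ∪
          seg _ (g + 2 * (k + 1)) (g + 2 * (k + 1) + 2 * l)) ∪ seg _ g (g + 2 * (k + 1)) =
          Finset.univ := by
        ext v
        simp only [Finset.mem_union, mem_seg, Finset.mem_univ, iff_true]
        omega
      rw [e] at h3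
      have ea : l + g / 2 + (k + 1) = a := by omega
      rw [h3.total (Finset.mem_univ _) hx, ea, RTree.val, RTree.val_path, RTree.val_path]
      simp only
      rw [← RTree.pathPoly_add, ← ea]
      congr 2
    · rw [Finset.disjoint_left]
      intro v hv
      simp only [mem_seg, Finset.mem_union] at hv ⊢
      omega
    · intro u hu v hv
      simp only [mem_seg, Finset.mem_union] at hu hv
      simp only [Fin.ext_iff]
      rcases hu with hu | hu
      · rw [SPgraph_adj_cross hg3 (by omega) (by omega)]; omega
      · have : ¬ (SPgraph g (k + 1) l).Adj u v := fun h =>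
          SPgraph_adj_mid hg3 hv.1 hv.2 hu.1 h.symm
        simp only [this, false_iff]
        omega

end SP

/-! ### Short cycles -/

section ShortCycle

open Classical

/-- If `G` induces the path in increasing order on the indices `[lo, hi)`, then its final segment of
`m` vertices has the independence polynomial of `P_m`. -/
lemma indW_seg_path {N lo hi : ℕ} {G : SimpleGraph (Fin N)}
    (hadj : ∀ i j : Fin N, lo ≤ i.val → i.val < j.val → j.val < hi →
      (G.Adj i j ↔ j.val = i.val + 1)) (hhi : hi ≤ N) (x : ℝ) :
    ∀ m b : ℕ, lo ≤ b → b + m = hi → indW G (seg N b hi) x = RTree.pathPoly m x := by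
  have step : ∀ b : ℕ, lo ≤ b → b < hi → indW G (seg N b hi) x =
      indW G (seg N (b + 1) hi) x + x * indW G (seg N (b + 2) hi) x := by
    intro b hb hb'
    have hv : (⟨b, by omega⟩ : Fin N) ∈ seg N b hi := by rw [mem_seg]; exact ⟨le_rfl, hb'⟩
    have e1 : (seg N b hi).erase ⟨b, by omega⟩ = seg N (b + 1) hi := by
      ext v
      simp only [Finset.mem_erase, mem_seg, ne_eq, Fin.ext_iff]
      omega
    have e2 : outside G (seg N b hi) ⟨b, by omega⟩ = seg N (b + 2) hi := by
      ext v
      simp only [mem_outside, mem_seg, ne_eq, Fin.ext_iff]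
      by_cases h : b < v.val ∧ v.val < hi
      · rw [hadj _ v hb h.1 h.2]
        simp only
        omega
      · constructor
        · rintro ⟨h1, h2, -⟩
          omega
        · intro h1
          omega
    rw [indW_erase hv, e1, e2]
  have he : ∀ b, hi ≤ b → indW G (seg N b hi) x = 1 := by
    intro b hb
    have e : seg N b hi = ∅ := by
      ext v; simp only [mem_seg, Finset.notMem_empty, iff_false]; omega
    rw [e, indW_empty]
  intro m
  induction m using Nat.twoStepInduction with
  | zero =>
    intro b _ h
    rw [he b (by omega), RTree.pathPoly]
  | one =>
    intro b hb h
    rw [step b hb (by omega), he _ (by omega), he _ (by omega), RTree.pathPoly]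
    ring
  | more m ih1 ih2 =>
    intro b hb h
    rw [step b hb (by omega), ih2 (b + 1) (by omega) (by omega), ih1 (b + 2) (by omega) (by omega)]
    rw [RTree.pathPoly]

lemma eval_cycleGraph {m : ℕ} (x : ℝ) : (indepPoly (cycleGraph (m + 3))).eval x =
    RTree.pathPoly (m + 2) x + x * RTree.pathPoly m x := by
  have hadj : ∀ i j : Fin (m + 3), 1 ≤ i.val → i.val < j.val →
      ((cycleGraph (m + 3)).Adj i j ↔ j.val = i.val + 1) := by
    intro i j h1 h2
    rw [cycleGraph_adj_iff (by omega)]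
    omega
  rw [eval_indepPoly, indW_erase (Finset.mem_univ (⟨0, by omega⟩ : Fin (m + 3)))]
  have e1 : (Finset.univ : Finset (Fin (m + 3))).erase ⟨0, by omega⟩ = seg (m + 3) 1 (m + 3) := by
    ext v
    simp only [Finset.mem_erase, Finset.mem_univ, mem_seg, ne_eq, Fin.ext_iff, and_true]
    omega
  have e2 : outside (cycleGraph (m + 3)) Finset.univ ⟨0, by omega⟩ = seg (m + 3) 2 (m + 2) := by
    ext v
    simp only [mem_outside, Finset.mem_univ, mem_seg, ne_eq, Fin.ext_iff, true_and]
    rw [cycleGraph_adj_iff (by omega)]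
    simp only [true_and]
    omega
  rw [e1, e2, indW_seg_path (lo := 1) (fun i j h1 h2 _ => hadj i j h1 h2) le_rfl x (m + 2) 1 le_rfl
    (by omega), indW_seg_path (lo := 2) (fun i j h1 h2 _ => hadj i j (by omega) h2) (by omega) x m 2
    le_rfl (by omega)]

/-- For `n ≤ 7` the cycle `C_n` dominates the graphs of order `n` in `S_P`. For `n = 3, 5` there is
equality; for `n = 7` the difference is `-x ^ 3`. -/
lemma le_eval_cycleGraph {a : ℕ} (ha : 1 ≤ a) (ha' : a ≤ 3) {x : ℝ} (hx : -1 < x) (hx0 : x ≤ 0) :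
    (1 + x) ^ a * RTree.pathPoly (a + 1) (x / (1 + x)) ≤
      (indepPoly (cycleGraph (2 * a + 1))).eval x := by
  have h : 1 + x ≠ 0 := by linarith
  obtain ⟨b, rfl⟩ : ∃ b, a = b + 1 := ⟨a - 1, by omega⟩
  have e := eval_cycleGraph (m := 2 * b) x
  have hb : b = 0 ∨ b = 1 ∨ b = 2 := by omega
  rcases hb with rfl | rfl | rfl
  · refine le_of_le_of_eq (le_of_eq ?_) e.symm
    simp only [RTree.pathPoly, Nat.reduceAdd]
    field_simp
  · refine le_of_le_of_eq (le_of_eq ?_) e.symm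
    simp only [RTree.pathPoly, Nat.reduceAdd]
    field_simp
    ring
  · refine le_of_le_of_eq ?_ e.symm
    have h3 : 0 ≤ -x ^ 3 := by
      have := pow_nonneg (neg_nonneg.2 hx0) 3
      linarith [this, show (-x) ^ 3 = -x ^ 3 by ring]
    have : (1 + x) ^ 3 * RTree.pathPoly 4 (x / (1 + x)) =
        RTree.pathPoly 6 x + x * RTree.pathPoly 4 x - -x ^ 3 := by
      simp only [RTree.pathPoly]
      field_simp
      ring
    simp only [Nat.reduceAdd, Nat.reduceMul]
    linarith

end ShortCycle

/-! ### The comparison -/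

/-- If `I(G, ·)` is given by a rooted tree `τ` of rank `a`, and `I(H, ·)` is bounded below by the
value coming from the path of the same rank, then `H ⪯ G`. -/
lemma pre_of_rep {V W : Type*} [Fintype V] [Fintype W] {G : SimpleGraph V} {H : SimpleGraph W}
    {τ : RTree} {a : ℕ} (hτ : τ.rank = a)
    (hG : ∀ x : ℝ, -1 < x → (indepPoly G).eval x = (1 + x) ^ a * (τ.val (x / (1 + x))).1)
    (hH : ∀ x : ℝ, -1 < x → x ≤ 0 →
      (1 + x) ^ a * RTree.pathPoly (a + 1) (x / (1 + x)) ≤ (indepPoly H).eval x) : Pre H G := by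
  subst hτ
  have hG0 : (indepPoly G).eval 0 = 1 := by
    rw [hG 0 (by norm_num)]
    simp [RTree.val_zero]
  -- The inequality at `t`, as long as `I(G, ·)` has no root in `[t, 0]`.
  have key : ∀ t ≤ 0, (∀ s, t ≤ s → s ≤ 0 → (indepPoly G).eval s ≠ 0) →
      (indepPoly G).eval t ≤ (indepPoly H).eval t := by
    intro t ht hne
    have hpos : ∀ s, t ≤ s → s ≤ 0 → 0 < (indepPoly G).eval s := fun s hs hs0 =>
      RTree.pos_of_ne_zero (indepPoly G).continuous (by rw [hG0]; norm_num) hs0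
        fun r hr hr0 => hne r (hs.trans hr) hr0
    -- The substitution `y = s / (1 + s)` has inverse `s = y / (1 - y)`.
    have hval : ∀ y ≤ 0, t ≤ y / (1 - y) → 0 < (τ.val y).1 := by
      intro y hy hty
      have h1 : 0 < 1 - y := by linarith
      have h2 : 1 + y / (1 - y) = 1 / (1 - y) := by field_simp; ring
      have h3 : 0 < 1 + y / (1 - y) := by rw [h2]; positivity
      have h4 : y / (1 - y) / (1 + y / (1 - y)) = y := by rw [h2]; field_simp
      have h5 := hpos _ hty (div_nonpos_of_nonpos_of_nonneg hy h1.le)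
      rw [hG _ (by linarith), h4] at h5
      exact pos_of_mul_pos_right h5 (pow_nonneg h3.le _)
    have ht1 : -1 < t := by
      by_contra hcon
      push Not at hcon
      have hall : ∀ y : ℝ, y ≤ 0 → 0 < (τ.val y).1 := by
        intro y hy
        refine hval y hy (hcon.trans ?_)
        rw [le_div_iff₀ (by linarith)]
        linarith
      have := (τ.le_pathPoly (-1) (by norm_num) fun y _ hy => hall y hy).2.2 1 (by omega)
      simp [RTree.pathPoly] at this
    have h1 : 0 < 1 + t := by linarith
    have hy : t / (1 + t) ≤ 0 := div_nonpos_of_nonpos_of_nonneg ht h1.le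
    have hle := (τ.le_pathPoly (t / (1 + t)) hy fun y hty hy0 => hval y hy0 (by
      rw [div_le_iff₀ h1] at hty
      rw [le_div_iff₀ (by linarith)]
      linarith)).1
    rw [hG t ht1]
    exact (mul_le_mul_of_nonneg_left hle (pow_nonneg h1.le _)).trans (hH t ht1 ht)
  have hbdd : BddAbove {x : ℝ | (indepPoly G).eval x = 0} := by
    have h0 : indepPoly G ≠ 0 := fun e => by simp [e] at hG0
    refine ((indepPoly G).roots.toFinset.finite_toSet.subset fun x hx => ?_).bddAbove
    simpa [h0] using hx
  have hgt : ∀ t, xi G < t → t ≤ 0 → (indepPoly G).eval t ≤ (indepPoly H).eval t :=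
    fun t ht ht0 => key t ht0 fun s hs _ hs' => absurd (le_csSup hbdd hs') (not_le.2 (ht.trans_le hs))
  rintro x ⟨hx, hx0⟩
  rcases hx0.eq_or_lt with rfl | hx0
  · refine key 0 le_rfl fun s hs hs0 => ?_
    rw [le_antisymm hs0 hs, hG0]
    norm_num
  · -- At the root `ξ(G)` itself the inequality follows by continuity from the right.
    refine le_of_tendsto_of_tendsto
      (((indepPoly G).continuous.tendsto x).mono_left nhdsWithin_le_nhds)
      (((indepPoly H).continuous.tendsto x).mono_left nhdsWithin_le_nhds)
      (b := nhdsWithin x (Set.Ioi x)) ?_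
    filter_upwards [Ioo_mem_nhdsGT hx0] with t ht
    exact hgt t (hx.trans_lt ht.1) ht.2.le

lemma WellCovered.exists_rep {V : Type*} [Fintype V] {G : SimpleGraph V} {l : V} {a : ℕ}
    (hG : Unicyclic G) (hwc : WellCovered G) (hcard : Fintype.card V = 2 * a + 1)
    (hl : degIn G Finset.univ l = 1) : ∃ τ : RTree, τ.rank = a ∧
      ∀ x : ℝ, -1 < x → (indepPoly G).eval x = (1 + x) ^ a * (τ.val (x / (1 + x))).1 := by
  classical
  obtain ⟨w, hw⟩ := exists_leaf_bridge (Finset.mem_univ l) hl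
  obtain ⟨k, hk⟩ := hwc.exists_WC
  have e : Finset.univ.erase l ∪ {l} = (Finset.univ : Finset V) := by
    ext v; by_cases h : v = l <;> simp [h]
  rw [← e] at hk
  have hext := (hk.bridge_leaf hw).2
  rw [e] at hext
  have hodd : Odd (Finset.univ : Finset V).card := by
    rw [Finset.card_univ, hcard]; exact odd_two_mul_add_one a
  obtain ⟨τ, b, h1, h2, h3⟩ := (hG.uniOn.rep (Finset.mem_univ w)).1 hext hodd
  rw [Finset.card_univ, hcard] at h2
  have hb : b = a := by omega
  subst hb
  refine ⟨τ, by omega, fun x hx => ?_⟩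
  rw [eval_indepPoly]
  exact h1.total (Finset.mem_univ w) hx
/-- Let `n ≥ 3` be odd and `G` a connected well-covered unicyclic graph of
order `n`. If `n ≤ 7` then `C_n ⪯ G`; if `n ≥ 9` then `H ⪯ G` for every graph `H` of order
`n` in the family `S_P`. -/
theorem stmt12 {V : Type*} [Fintype V] (n : ℕ) (hn : 3 ≤ n) (hodd : Odd n)
    (G : SimpleGraph V) (hcard : Fintype.card V = n)
    (hG : Unicyclic G) (hwc : WellCovered G) :
    (n ≤ 7 → Pre (cycleGraph n) G) ∧
    (9 ≤ n → ∀ (W : Type) [Fintype W] (H : SimpleGraph W),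
      (∃ g k l : ℕ, (g = 3 ∨ g = 5) ∧ 1 ≤ k + l ∧ g + 2*k + 2*l = n ∧
        Nonempty (H ≃g SPgraph g k l)) → Pre H G) := by
  obtain ⟨a, rfl⟩ := hodd
  rcases hG.leaf_or_regular with ⟨l, hl⟩ | hreg
  · obtain ⟨τ, hτ, hrep⟩ := hwc.exists_rep hG hcard hl
    refine ⟨fun h7 => ?_, fun _ W _ H => ?_⟩
    · exact pre_of_rep hτ hrep fun x hx hx0 => le_eval_cycleGraph (by omega) (by omega) hx hx0
    · rintro ⟨g, k, l', hg, -, hgn, ⟨e⟩⟩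
      refine pre_of_rep hτ hrep fun x hx _ => ?_
      rw [indepPoly_congr e, eval_SPgraph hg hgn hx]
  · obtain ⟨f, hinj, hsurj, hadj⟩ := exists_cyclic_labelling hcard hG.1 hreg
    refine ⟨fun _ => ?_, fun h9 => ?_⟩
    · obtain ⟨e⟩ := nonempty_iso_cycleGraph hn f hinj hsurj hadj
      intro x _
      rw [indepPoly_congr e]
    · obtain ⟨k, hk⟩ := hwc.exists_WC
      exact absurd hk (not_WC_cycle h9 f hinj hsurj hadj)
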